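/- Let q = p^f be a power of a prime p, take the prime v = t, let r > 1, and let s_1,…,s_r be negative integers such that for every 1 ≤ i ≤ r one has r−i ≤ L_{−s_i} + 1 (i.e. (s_1,…,s_r) is not a trivial zero for v = t). Then ζ_t(s_1,…,s_r) ≠ 0 and its t-adic valuation satisfies v_t(ζ_t(s_1,…,s_r)) = Σ_{i=1}^r v_t(S̃_{r−i}(s_i)). -/

import Mathlib

/-!
Write `k_i = -s_i`, `q = p ^ f`, and `S̃_d` for `S̃_d(-k)`. The proof shows that the term of
`ζ_t(s_1, …, s_r)` with `(d_1, …, d_r) = (r - 1, …, 0)` has strictly smaller valuation at `t` than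
all the others.

*Expansion.* For `d ≥ 1`, expand `a ^ k` for `a = t ^ d + c_{d-1} t ^ (d-1) + ⋯ + c_0` digit by digit
in base `p` and sum over `c_0 ≠ 0` and `c_1, …, c_{d-1}`. The sums of powers over `F` kill all terms
but those of the decompositions `k = μ_0 + ⋯ + μ_d` without carries, with
`q - 1 ∣ μ_0, …, μ_{d-1}` and `μ_1, …, μ_{d-1} > 0`; such a decomposition contributes a nonzero
multiple of `t ^ (∑ i μ_i)` (`rPowerSum_eq`, `adm_iff`).

*Unique minimum.* If `d ≤ L_k + 1`, exactly one admissible decomposition has least weight `∑ i μ_i`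
(`exists_unique_min_of_Lval`), so that `S̃_d ≠ 0` and its valuation is this weight. For the proof,
regard the digits of `k` as units of size `p ^ e` having type `e` modulo `f`. The weight is the sum of
the sizes of the tails `μ_j + ⋯ + μ_d`, and for given numbers of units of each type a tail is smallest
when it takes the smallest units. Divisibility by `q - 1` means that the type counts of the tails are
`n_τ + p c_{τ+1} - c_τ` for an integral vector `c`, and positivity of the parts means that these vectors
increase strictly along the tails (`headCount_conf`). This gives an optimization problem
(`Data.IsConf`, `Data.F`) with submodular cost. An exchange argument (`Data.improve`), which
rests on the fact that units smaller than `p ^ E` have total size less than `p ^ E`, shows that its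
optimum is unique (`Data.opt_unique`); uniqueness implies that the optimal tails are nested
(`Data.opt_nested`), hence come from a decomposition (`adm_of_opt`). The bound `d ≤ L_k + 1` makes the
problem feasible (`exists_conf`, `ds_le_cyc`).

*Monotonicity.* Merging `μ_0` and `μ_1` turns an admissible decomposition of length `d + 1 ≥ 2` into one
of length `d` and lower weight (`min_weight_mono`). So for `d' > d ≥ 1` every monomial of `S̃_{d'}`
has exponent larger than the valuation of `S̃_d` (`rPowerSum_main`). A strictly decreasing sequence
other than `(r - 1, …, 0)` has `d_1 > r - 1 ≥ 1` and `d_i ≥ r - i` for all `i`, which gives the claim.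
-/

open Polynomial

open scoped Classical

/-- The monic polynomial `X^d + c_{d-1} X^{d-1} + ... + c_0` determined by its lower
coefficients `c : Fin d → F`; these parametrize the monic polynomials of degree `d`. -/
noncomputable def monicPoly (F : Type) [Field F] (d : ℕ) (c : Fin d → F) : F[X] :=
  X ^ d + ∑ i : Fin d, C (c i) * X ^ (i : ℕ)

/-- `S_d(-k) = Σ_{a monic of degree d} a^k`. -/
noncomputable def powerSum (F : Type) [Field F] [Fintype F] (d k : ℕ) : F[X] :=
  ∑ c : Fin d → F, monicPoly F d c ^ k

/-- `S̃_d(-k) = Σ_{a monic of degree d, v ∤ a} a^k`. -/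
noncomputable def rPowerSum (F : Type) [Field F] [Fintype F] (v : F[X]) (d k : ℕ) : F[X] :=
  ∑ c : Fin d → F, if v ∣ monicPoly F d c then 0 else monicPoly F d c ^ k

/-- `∑ i, m i = k` with no carrying of base-`p` digits. -/
def NoCarry (p : ℕ) {n : ℕ} (m : Fin n → ℕ) (k : ℕ) : Prop :=
  (∑ i, m i = k) ∧
    ∀ j : ℕ, (∑ i, (Nat.digits p (m i)).getD j 0) = (Nat.digits p k).getD j 0

/-- `U_d(k)`. -/
def Uset (p q d k : ℕ) : Set (Fin (d + 1) → ℕ) :=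
  {m | NoCarry p m k ∧ ∀ i : Fin (d + 1), 0 < (i : ℕ) → 0 < m i ∧ (q - 1) ∣ m i}

/-- `V_d(k)`. -/
def Vset (p q d k : ℕ) : Set (Fin (d + 1) → ℕ) :=
  {m | m ∈ Uset p q d k ∧ 0 < m 0}

/-- `W_d(k)`, the index set for the restricted power sum at `v = t`. -/
def Wset (p q d k : ℕ) : Set (Fin (d + 1) → ℕ) :=
  {m | NoCarry p m k ∧
      (∀ i : Fin (d + 1), 0 < (i : ℕ) → (i : ℕ) < d → 0 < m i ∧ (q - 1) ∣ m i) ∧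
      (q - 1) ∣ m (Fin.last d)}

/-- the weight `d·m_0 + (d-1)·m_1 + ⋯ + 1·m_{d-1}`. -/
def wt {d : ℕ} (m : Fin (d + 1) → ℕ) : ℕ := ∑ i : Fin (d + 1), (d - (i : ℕ)) * m i

/-- `L_k = min_{0 ≤ i ≤ f-1} l(k·p^i)/(q-1)` where `l` is the base-`q` digit sum. -/
noncomputable def Lval (q p f k : ℕ) : ℚ :=
  (Finset.Icc 0 (f - 1)).inf' ⟨0, by simp⟩
    (fun i => ((Nat.digits q (k * p ^ i)).sum : ℚ) / ((q : ℚ) - 1))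

/-- the `v`-adic multiple zeta value at negative integers `s_1, …, s_r`. -/
noncomputable def zetaV (F : Type) [Field F] [Fintype F] (v : F[X]) {r : ℕ}
    (s : Fin r → ℤ) : F[X] :=
  ∑ᶠ d ∈ {d : Fin r → ℕ | StrictAnti d}, ∏ i, rPowerSum F v (d i) (-(s i)).toNat

/-- the multiple zeta value at negative integers `s_1, …, s_r`. -/
noncomputable def zetaMZV (F : Type) [Field F] [Fintype F] {r : ℕ} (s : Fin r → ℤ) : F[X] :=
  ∑ᶠ d ∈ {d : Fin r → ℕ | StrictAnti d}, ∏ i, powerSum F (d i) (-(s i)).toNat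

/-- the trivial-zero condition for a prime of degree `e`. -/
def TrivialZeroCond (q p f : ℕ) {r : ℕ} (s : Fin r → ℤ) (e : ℕ) : Prop :=
  (∃ i : Fin r, s i < 0 ∧
      Lval q p f (-(s i)).toNat + (e : ℚ) < ((r - 1 - (i : ℕ) : ℕ) : ℚ)) ∨
  (∃ i j : Fin r, j < i ∧ s i < 0 ∧ s j < 0 ∧
      (r - 1 - (i : ℕ) : ℕ) < e ∧
      Lval q p f (-(s i)).toNat < ((r - 1 - (i : ℕ) : ℕ) : ℚ) ∧
      Lval q p f (-(s j)).toNat < (((i : ℕ) - (j : ℕ) : ℕ) : ℚ))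

set_option linter.unusedSectionVars false

/-! ### Stocks of units and their submodular cost -/

namespace SheatsOpt

variable {I : Type} [Fintype I] [DecidableEq I]

/-- A stock of weighted units: for each type `b : I` there are `n b` units, numbered by
`0 ≤ h < n b`, the unit `h` having size `p ^ ex b h`. Sizes increase with `h` (`mono`), units of
different types have different sizes (`inj`), and at most `p - 1` units share a size (`strict`), so
that sets of units behave like base-`p` expansions without carries. The permutation `σ` of the
types and the offset `r` enter the linear system `Data.N`. The functions `n` and `ex b` take integer
arguments, and only values `ex b h` with `0 ≤ h < n b` matter. -/
structure Data (I : Type) where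
  /-- the permutation of the types -/
  σ : Equiv.Perm I
  /-- the base -/
  p : ℕ
  hp : 2 ≤ p
  /-- the offset of the linear system -/
  r : I → ℤ
  /-- the number of units of each type -/
  n : I → ℤ
  /-- the exponent of a unit -/
  ex : I → ℤ → ℕ
  mono : ∀ b h h', 0 ≤ h → h ≤ h' → h' < n b → ex b h ≤ ex b h'
  inj : ∀ b b' h h', 0 ≤ h → h < n b → 0 ≤ h' → h' < n b' → ex b h = ex b' h' → b = b'
  strict : ∀ b h, 0 ≤ h → h + (p - 1) < n b → ex b h < ex b (h + (p - 1))

namespace Data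
variable (A : Data I)

/-- The number of units of type `b` selected by the parameter vector `c`. -/
def N (c : I → ℤ) (b : I) : ℤ := A.r b + A.p * c (A.σ b) - c b

/-- The numbers of selected units are available in the stock. -/
def Feas (c : I → ℤ) : Prop := ∀ b, 0 ≤ A.N c b ∧ A.N c b ≤ A.n b

/-- The total size of the `x` smallest units of type `b`. -/
noncomputable def G (b : I) (x : ℤ) : ℤ := ∑ h ∈ Finset.Ico 0 x, (A.p : ℤ) ^ A.ex b h

/-- The cost of a parameter vector: of each type `b` the `N c b` smallest units are paid for. -/
noncomputable def g (c : I → ℤ) : ℤ := ∑ b, A.G b (A.N c b)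

/-- A configuration: feasible vectors `c 0, …, c m`, increasing by at least `1` in every coordinate
at every step, with last vector bounded by `U`. Values `c j` with `j > m` are irrelevant. -/
def IsConf (m : ℕ) (U : I → ℤ) (c : ℕ → I → ℤ) : Prop :=
  (∀ j ≤ m, A.Feas (c j)) ∧ (∀ j < m, ∀ b, c j b + 1 ≤ c (j + 1) b) ∧ ∀ b, c m b ≤ U b

/-- The total cost of a configuration. -/
noncomputable def F (m : ℕ) (c : ℕ → I → ℤ) : ℤ := ∑ j ∈ Finset.range (m + 1), A.g (c j)

/-- A configuration of minimal total cost. -/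
def IsOpt (m : ℕ) (U : I → ℤ) (c : ℕ → I → ℤ) : Prop :=
  A.IsConf m U c ∧ ∀ c', A.IsConf m U c' → A.F m c ≤ A.F m c'

lemma pZ : (2 : ℤ) ≤ A.p := by exact_mod_cast A.hp

/-- A set of units of exponents below `E` has total size less than `p ^ E`, since each exponent
occurs at most `p - 1` times. -/
lemma digit_bound (D : Finset (I × ℤ)) (E : ℕ)
    (hD : ∀ x ∈ D, 0 ≤ x.2 ∧ x.2 < A.n x.1 ∧ A.ex x.1 x.2 < E) :
    ∑ x ∈ D, (A.p : ℤ) ^ A.ex x.1 x.2 < (A.p : ℤ) ^ E := by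
  have hp := A.pZ
  have h1 : ∑ x ∈ D, (A.p : ℤ) ^ A.ex x.1 x.2
      = ∑ ε ∈ Finset.range E, ∑ x ∈ D with A.ex x.1 x.2 = ε, (A.p : ℤ) ^ A.ex x.1 x.2 := by
    rw [Finset.sum_fiberwise_of_maps_to]
    intro x hx
    simpa using (hD x hx).2.2
  have h2 : ∀ ε ∈ Finset.range E,
      ∑ x ∈ D with A.ex x.1 x.2 = ε, (A.p : ℤ) ^ A.ex x.1 x.2 ≤ (A.p - 1) * (A.p : ℤ) ^ ε := by
    intro ε _
    have : ∑ x ∈ D with A.ex x.1 x.2 = ε, (A.p : ℤ) ^ A.ex x.1 x.2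
        = ((D.filter fun x => A.ex x.1 x.2 = ε).card : ℤ) * (A.p : ℤ) ^ ε := by
      rw [← nsmul_eq_mul]
      apply Finset.sum_eq_card_nsmul
      intro x hx
      rw [(Finset.mem_filter.1 hx).2]
    rw [this]
    apply mul_le_mul_of_nonneg_right _ (by positivity)
    set K := D.filter fun x => A.ex x.1 x.2 = ε with hK
    rcases K.eq_empty_or_nonempty with h0 | hne
    · rw [h0]; simp; omega
    · obtain ⟨x0, hx0, hmin⟩ := K.exists_min_image (fun x => x.2) hne
      have hx0' := Finset.mem_filter.1 hx0
      have d0 := hD x0 hx0'.1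
      have hsub : K ⊆ (Finset.Ico x0.2 (x0.2 + (A.p - 1))).image (fun h => (x0.1, h)) := by
        intro x hx
        have hx' := Finset.mem_filter.1 hx
        have d := hD x hx'.1
        have hb : x0.1 = x.1 := A.inj _ _ _ _ d0.1 d0.2.1 d.1 d.2.1 (by rw [hx0'.2, hx'.2])
        have hle := hmin x hx
        rw [Finset.mem_image]
        refine ⟨x.2, ?_, by rw [hb]⟩
        rw [Finset.mem_Ico]
        refine ⟨hle, ?_⟩
        by_contra hcon
        push Not at hcon
        have e1 := A.strict x0.1 x0.2 d0.1 (by rw [hb] ; omega)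
        have e2 := A.mono x0.1 (x0.2 + (A.p - 1)) x.2 (by omega) hcon (by rw [hb]; omega)
        rw [hx0'.2] at e1
        rw [hb] at e2 e1
        rw [hx'.2] at e2
        omega
      have := (Finset.card_le_card hsub).trans Finset.card_image_le
      rw [Int.card_Ico] at this
      omega
  have h3 : ∑ ε ∈ Finset.range E, ((A.p : ℤ) - 1) * (A.p : ℤ) ^ ε = (A.p : ℤ) ^ E - 1 := by
    rw [← Finset.mul_sum, mul_comm]
    exact geom_sum_mul _ _
  rw [h1]
  have := Finset.sum_le_sum h2
  rw [h3] at this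
  omega

lemma G_diff (b : I) {x y : ℤ} (hx : 0 ≤ x) (hxy : x ≤ y) :
    A.G b y - A.G b x = ∑ h ∈ Finset.Ico x y, (A.p : ℤ) ^ A.ex b h := by
  unfold G
  rw [← Finset.Ico_union_Ico_eq_Ico hx hxy, Finset.sum_union (Finset.Ico_disjoint_Ico_consecutive _ _ _)]
  ring

lemma G_mono (b : I) {x y : ℤ} (hx : 0 ≤ x) (hxy : x ≤ y) : A.G b x ≤ A.G b y := by
  have := A.G_diff b hx hxy
  have : 0 ≤ A.G b y - A.G b x := by rw [this]; positivity
  omega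

lemma G_succ (b : I) {x : ℤ} (hx : 0 ≤ x) : A.G b (x + 1) = A.G b x + (A.p : ℤ) ^ A.ex b x := by
  have := A.G_diff b hx (by omega : x ≤ x + 1)
  rw [show Finset.Ico x (x + 1) = {x} by ext; simp; omega] at this
  simp at this
  omega

/-- Discrete convexity of `G b`, due to sizes increasing with the unit number. -/
lemma G_convex (b : I) {lo x y hi : ℤ} (h0 : 0 ≤ lo) (hn : hi ≤ A.n b) (h1 : lo ≤ x) (h2 : x ≤ hi)
    (h3 : x + y = lo + hi) : A.G b x + A.G b y ≤ A.G b lo + A.G b hi := by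
  have hy : lo ≤ y := by omega
  have e1 := A.G_diff b h0 h1
  have e2 := A.G_diff b (h0.trans hy) (by omega : y ≤ hi)
  have : ∑ h ∈ Finset.Ico lo x, (A.p : ℤ) ^ A.ex b h ≤ ∑ h ∈ Finset.Ico y hi, (A.p : ℤ) ^ A.ex b h := by
    have hs : Finset.Ico y hi = (Finset.Ico lo x).image (fun h => h + (y - lo)) := by
      rw [Finset.image_add_right_Ico]
      congr 1 <;> omega
    rw [hs, Finset.sum_image (by intro a _ b _ h; simpa using h)]
    apply Finset.sum_le_sum
    intro h hh
    rw [Finset.mem_Ico] at hh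
    apply pow_le_pow_right₀ (by have := A.pZ; omega)
    exact A.mono b _ _ (by omega) (by omega) (by omega)
  omega

lemma N_sup_inf (x y : I → ℤ) (b : I) :
    A.N (x ⊔ y) b + A.N (x ⊓ y) b = A.N x b + A.N y b := by
  simp only [N, Pi.sup_apply, Pi.inf_apply]
  have h1 := max_add_min (x (A.σ b)) (y (A.σ b))
  have h2 := max_add_min (x b) (y b)
  linear_combination (A.p : ℤ) * h1 - h2

/-- The counts of `x ⊓ y` lie between those of `x` and `y`, because `N` is increasing in one
coordinate of `c` and, when `σ b ≠ b`, decreasing in another. -/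
lemma N_inf_bd (x y : I → ℤ) (b : I) :
    (min (A.N x b) (A.N y b) ≤ A.N (x ⊓ y) b) ∧ A.N (x ⊓ y) b ≤ max (A.N x b) (A.N y b) := by
  have hp := A.pZ
  simp only [N, Pi.inf_apply]
  rcases le_total (x (A.σ b)) (y (A.σ b)) with h1 | h1 <;> rcases le_total (x b) (y b) with h2 | h2 <;>
    simp only [h1, h2, inf_of_le_left, inf_of_le_right, le_max_iff, min_le_iff] <;>
    constructor <;> first
      | (left; nlinarith) | (right; nlinarith)

lemma feas_inf {x y : I → ℤ} (hx : A.Feas x) (hy : A.Feas y) : A.Feas (x ⊓ y) := by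
  intro b
  have := A.N_inf_bd x y b
  have h1 := hx b
  have h2 := hy b
  constructor
  · exact le_trans (le_min h1.1 h2.1) this.1
  · exact le_trans this.2 (max_le h1.2 h2.2)

lemma feas_sup {x y : I → ℤ} (hx : A.Feas x) (hy : A.Feas y) : A.Feas (x ⊔ y) := by
  intro b
  have := A.N_inf_bd x y b
  have h1 := hx b
  have h2 := hy b
  have h3 := A.N_sup_inf x y b
  rcases le_total (A.N x b) (A.N y b) with h | h <;> simp [h] at this <;> omega

/-- The cost is submodular on feasible vectors. -/
lemma g_submod {x y : I → ℤ} (hx : A.Feas x) (hy : A.Feas y) :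
    A.g (x ⊓ y) + A.g (x ⊔ y) ≤ A.g x + A.g y := by
  unfold g
  rw [← Finset.sum_add_distrib, ← Finset.sum_add_distrib]
  apply Finset.sum_le_sum
  intro b _
  have := A.N_inf_bd x y b
  have h1 := hx b
  have h2 := hy b
  have h3 := A.N_sup_inf x y b
  rcases le_total (A.N x b) (A.N y b) with h | h <;> simp [h] at this
  · exact A.G_convex b h1.1 h2.2 this.1 this.2 (by omega)
  · have := A.G_convex b h2.1 h1.2 this.1 this.2 (y := A.N (x ⊔ y) b) (by omega)
    omega

/-- The largest vector `z ≤ u` with nonnegative counts; it is tight in each coordinate: either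
`z b = u b` or the count at `b` vanishes. -/
lemma exists_closure (x u : I → ℤ) (hxu : x ≤ u) (hx : ∀ b, 0 ≤ A.N x b) :
    ∃ z : I → ℤ, x ≤ z ∧ z ≤ u ∧ (∀ b, 0 ≤ A.N z b) ∧ (∀ b, z b = u b ∨ A.N z b = 0) ∧
      ∀ x' ≤ u, (∀ b, 0 ≤ A.N x' b) → x' ≤ z := by
  have hp := A.pZ
  set K := (Finset.Icc x u).filter fun z => ∀ b, 0 ≤ A.N z b with hK
  have hne : K.Nonempty := ⟨x, by simp [hK, hxu]; exact hx⟩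
  obtain ⟨z, hz⟩ := K.exists_maximal hne
  have hzK := hz.1
  simp only [hK, Finset.mem_filter, Finset.mem_Icc] at hzK
  refine ⟨z, hzK.1.1, hzK.1.2, hzK.2, ?_, ?_⟩
  · intro b
    by_contra hcon
    push Not at hcon
    have hlt : z b < u b := lt_of_le_of_ne (hzK.1.2 b) hcon.1
    have hN : 0 < A.N z b := lt_of_le_of_ne (hzK.2 b) (Ne.symm hcon.2)
    have hmem : Function.update z b (z b + 1) ∈ K := by
      simp only [hK, Finset.mem_filter, Finset.mem_Icc]
      refine ⟨⟨?_, ?_⟩, ?_⟩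
      · intro i
        by_cases h : i = b
        · subst h; simp; have : x i ≤ z i := hzK.1.1 i; omega
        · simp [h]; exact hzK.1.1 i
      · intro i
        by_cases h : i = b
        · subst h; simp; omega
        · simp [h]; exact hzK.1.2 i
      · intro i
        have hi := hzK.2 i
        unfold N at hi hN ⊢
        have h1 : z (A.σ i) ≤ Function.update z b (z b + 1) (A.σ i) := by
          by_cases h : A.σ i = b
          · rw [h]; simp
          · simp [h]
        have h2 : (A.p : ℤ) * z (A.σ i) ≤ A.p * Function.update z b (z b + 1) (A.σ i) :=
          mul_le_mul_of_nonneg_left h1 (by omega)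
        by_cases h : i = b
        · subst h; simp only [Function.update_self] at h2 ⊢; omega
        · rw [Function.update_of_ne h]; omega
    have h := hz.2 hmem (by
      intro i
      by_cases h : i = b
      · subst h; simp
      · simp [h])
    have := h b
    simp at this
  · intro x' hx'u hx'
    have hmem : z ⊔ x' ∈ K := by
      simp only [hK, Finset.mem_filter, Finset.mem_Icc]
      refine ⟨⟨le_sup_of_le_left hzK.1.1, sup_le hzK.1.2 hx'u⟩, ?_⟩
      intro b
      have h3 := A.N_sup_inf z x' b
      have := A.N_inf_bd z x' b
      have h1 := hzK.2 b
      have h2 := hx' b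
      rcases le_total (A.N z b) (A.N x' b) with h | h <;> simp [h] at this <;> omega
    exact le_sup_right.trans (hz.2 hmem le_sup_left)

end Data
end SheatsOpt

/-! ### Comparison of the largest units -/

namespace SheatsOpt
variable {I : Type} [Fintype I] [DecidableEq I]
namespace Data
variable (A : Data I)

lemma digit_bound_sigma (P : Finset I) (lo hi : I → ℤ) (E : ℕ)
    (h : ∀ i ∈ P, 0 ≤ lo i ∧ hi i ≤ A.n i ∧ A.ex i (hi i - 1) < E) :
    ∑ i ∈ P, ∑ h ∈ Finset.Ico (lo i) (hi i), (A.p : ℤ) ^ A.ex i h < (A.p : ℤ) ^ E := by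
  rw [Finset.sum_sigma']
  have := A.digit_bound
    ((P.sigma fun i => Finset.Ico (lo i) (hi i)).image fun x => (x.1, x.2)) E ?_
  · rwa [Finset.sum_image] at this
    rintro ⟨a, b⟩ _ ⟨c, d⟩ _ hh
    simp at hh
    obtain ⟨rfl, rfl⟩ := hh
    rfl
  · intro x hx
    simp only [Finset.mem_image, Finset.mem_sigma, Finset.mem_Ico] at hx
    obtain ⟨y, ⟨hy1, hy2, hy3⟩, rfl⟩ := hx
    obtain ⟨h1, h2, h3⟩ := h _ hy1
    refine ⟨by simp; omega, by simp; omega, ?_⟩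
    exact lt_of_le_of_lt (A.mono _ _ _ (by simp; omega) (by simp; omega) (by simp; omega)) h3

lemma sum_N (x : I → ℤ) : ∑ b, A.N x b = ∑ b, A.r b + (A.p - 1) * ∑ b, x b := by
  unfold N
  rw [Finset.sum_sub_distrib, Finset.sum_add_distrib, ← Finset.mul_sum, Equiv.sum_comp A.σ x]
  ring

/-- If `x ≤ y`, `x ≠ y` and `x` costs no more than `y`, then some unit selected by `y` and not by
`x` is larger than the first unit of every type from which `x` selects more than `y`. -/
lemma exists_top {x y : I → ℤ} (hxy : x ≤ y) (hne : x ≠ y) (hx : A.Feas x) (hy : A.Feas y)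
    (hg : A.g x ≤ A.g y) :
    ∃ i, A.N x i < A.N y i ∧
      ∀ l, A.N y l < A.N x l → A.ex l (A.N y l) < A.ex i (A.N y i - 1) := by
  have hp := A.pZ
  set P := Finset.univ.filter fun i => A.N x i < A.N y i with hP
  have hPne : P.Nonempty := by
    by_contra hcon
    rw [Finset.not_nonempty_iff_eq_empty] at hcon
    have hle : ∀ i ∈ Finset.univ, A.N y i ≤ A.N x i := by
      intro i _
      by_contra hlt
      have : i ∈ P := by simp [hP]; omega
      rw [hcon] at this
      simp at this
    have h1 := Finset.sum_le_sum hle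
    rw [A.sum_N, A.sum_N] at h1
    have h2 : ∑ b, x b < ∑ b, y b := by
      have : x < y := lt_of_le_of_ne hxy hne
      obtain ⟨_, b, hb⟩ := Pi.lt_def.1 this
      exact Finset.sum_lt_sum (fun i _ => hxy i) ⟨b, Finset.mem_univ _, hb⟩
    nlinarith
  obtain ⟨i, hi, hmax⟩ := P.exists_max_image (fun i => A.ex i (A.N y i - 1)) hPne
  have hi' : A.N x i < A.N y i := by simpa [hP] using hi
  refine ⟨i, hi', ?_⟩
  intro l hl
  by_contra hcon
  push Not at hcon
  have hxi := hx i
  have hyi := hy i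
  have hxl := hx l
  have hyl := hy l
  have hne' : A.ex i (A.N y i - 1) ≠ A.ex l (A.N y l) := by
    intro h
    have := A.inj _ _ _ _ (by omega) (by omega) (by omega) (by omega) h
    subst this
    omega
  have hlt := lt_of_le_of_ne hcon hne'
  have hb := A.digit_bound_sigma P (A.N x) (A.N y) (A.ex i (A.N y i - 1) + 1) (by
    intro j hj
    exact ⟨(hx j).1, (hy j).2, Nat.lt_succ_of_le (hmax j hj)⟩)
  have hpow : (A.p : ℤ) ^ (A.ex i (A.N y i - 1) + 1) ≤ (A.p : ℤ) ^ A.ex l (A.N y l) :=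
    pow_le_pow_right₀ (by omega) hlt
  have hsum : A.g y - A.g x = ∑ j ∈ P, (A.G j (A.N y j) - A.G j (A.N x j))
      + ∑ j ∈ Pᶜ, (A.G j (A.N y j) - A.G j (A.N x j)) := by
    rw [Finset.sum_add_sum_compl, Finset.sum_sub_distrib]
    rfl
  have h1 : ∑ j ∈ P, (A.G j (A.N y j) - A.G j (A.N x j))
      = ∑ i ∈ P, ∑ h ∈ Finset.Ico (A.N x i) (A.N y i), (A.p : ℤ) ^ A.ex i h := by
    apply Finset.sum_congr rfl
    intro j hj
    apply A.G_diff j (hx j).1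
    have : A.N x j < A.N y j := by simpa [hP] using hj
    omega
  have hlP : l ∈ Pᶜ := by simp [hP]; omega
  have h2 : ∑ j ∈ Pᶜ, (A.G j (A.N x j) - A.G j (A.N y j)) ≥ A.G l (A.N x l) - A.G l (A.N y l) := by
    apply Finset.single_le_sum (f := fun j => A.G j (A.N x j) - A.G j (A.N y j)) _ hlP
    intro j hj
    have : A.N y j ≤ A.N x j := by simpa [hP] using hj
    have := A.G_mono j (hy j).1 this
    simp; omega
  have h3 : ∑ j ∈ Pᶜ, (A.G j (A.N y j) - A.G j (A.N x j))
      = - ∑ j ∈ Pᶜ, (A.G j (A.N x j) - A.G j (A.N y j)) := by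
    rw [← Finset.sum_neg_distrib]
    apply Finset.sum_congr rfl
    intros; ring
  have h4 := A.G_succ l hyl.1
  have h5 := A.G_mono l (x := A.N y l + 1) (y := A.N x l) (by omega) (by omega)
  omega

end Data
end SheatsOpt

/-! ### The exchange step -/

namespace SheatsOpt
variable {I : Type} [Fintype I] [DecidableEq I]
namespace Data
variable (A : Data I)

lemma chain {m : ℕ} {Y : ℕ → I → ℤ} (h : ∀ j < m, ∀ b, Y j b + 1 ≤ Y (j + 1) b) (b : I)
    {j j' : ℕ} (hj : j ≤ j') (hj' : j' ≤ m) : Y j b + (j' - j : ℤ) ≤ Y j' b := by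
  induction j', hj using Nat.le_induction with
  | base => simp
  | succ k hk ih =>
    have := ih (by omega)
    have := h k (by omega) b
    push_cast
    omega

lemma N_add_const (x : I → ℤ) (b : I) : A.N (fun i => x i + 1) b = A.N x b + (A.p - 1) := by
  unfold N; ring

/-- The exchange step behind uniqueness. If a configuration `X` lies below `Y`, the two differ in the
last vector, and the last vector of `X` costs no more than that of `Y`, then `Y` is not optimal.
The cheaper configuration `Z` comes from lowering by one those coordinates of `Y` in which the
last vectors differ, wherever the chain conditions force this, and passing to the largest vectors
with nonnegative counts. The last vector then loses a unit which is larger than all units gained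
at any step together. -/
lemma improve {m : ℕ} {U : I → ℤ} {X Y : ℕ → I → ℤ} (hX : A.IsConf m U X) (hY : A.IsConf m U Y)
    (hXY : ∀ j ≤ m, X j ≤ Y j) (hne : X m ≠ Y m) (hg : A.g (X m) ≤ A.g (Y m)) :
    ∃ Z, A.IsConf m U Z ∧ A.F m Z < A.F m Y := by
  have hp := A.pZ
  obtain ⟨hXf, hXc, hXU⟩ := hX
  obtain ⟨hYf, hYc, hYU⟩ := hY
  obtain ⟨iT, hiT, hT⟩ := A.exists_top (hXY m le_rfl) hne (hXf m le_rfl) (hYf m le_rfl) hg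
  set χ : I → ℤ := fun b => if X m b < Y m b then 1 else 0 with hχ
  have χ0 : ∀ b, (χ b = 0 ∧ X m b = Y m b) ∨ (χ b = 1 ∧ X m b < Y m b) := by
    intro b
    have : X m b ≤ Y m b := hXY m le_rfl b
    by_cases h : X m b < Y m b
    · right; simp [hχ, h]
    · left; simp [hχ, h]; omega
  set u : ℕ → I → ℤ := fun j b => min (Y j b) (Y m b - χ b - (m - j)) with hu
  have u_cases : ∀ j ≤ m, ∀ b, (u j b = Y j b) ∨
      (u j b = Y j b - 1 ∧ χ b = 1 ∧ Y j b = Y m b - (m - j)) := by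
    intro j hj b
    have h1 := chain hYc b hj le_rfl
    have h2 := χ0 b
    simp only [hu]
    omega
  have u_le : ∀ j b, u j b ≤ Y m b - χ b - (m - j) := fun j b => min_le_right _ _
  have hXu : ∀ j ≤ m, X j ≤ u j := by
    intro j hj b
    have h1 := chain hXc b hj le_rfl
    have h2 : X j b ≤ Y j b := hXY j hj b
    have h3 := χ0 b
    simp only [hu]
    omega
  have hZ : ∀ j, ∃ z : I → ℤ, j ≤ m → (X j ≤ z ∧ z ≤ u j ∧ (∀ b, 0 ≤ A.N z b) ∧
      (∀ b, z b = u j b ∨ A.N z b = 0) ∧ ∀ x' ≤ u j, (∀ b, 0 ≤ A.N x' b) → x' ≤ z) := by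
    intro j
    by_cases hj : j ≤ m
    · obtain ⟨z, hz⟩ := A.exists_closure (X j) (u j) (hXu j hj) (fun b => (hXf j hj b).1)
      exact ⟨z, fun _ => hz⟩
    · exact ⟨0, fun h => absurd h hj⟩
  choose Z hZ using hZ
  have hZY : ∀ j ≤ m, ∀ b, Z j b ≤ Y j b := by
    intro j hj b
    have h1 : Z j b ≤ u j b := (hZ j hj).2.1 b
    exact h1.trans (min_le_left _ _)
  -- the chosen index carries the largest unit among the last units at the indices that can lose one
  set Cd := Finset.univ.filter fun i => X m (A.σ i) < Y m (A.σ i) ∧ 1 ≤ A.N (Y m) i with hCd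
  have hiTC : iT ∈ Cd := by
    simp only [hCd, Finset.mem_filter, Finset.mem_univ, true_and]
    have h1 := (hXf m le_rfl iT).1
    refine ⟨?_, by omega⟩
    have h2 : X m iT ≤ Y m iT := hXY m le_rfl iT
    unfold N at hiT
    by_contra hcon
    push Not at hcon
    have := mul_le_mul_of_nonneg_left hcon (by omega : (0 : ℤ) ≤ A.p)
    omega
  obtain ⟨i', hi', hmax⟩ := Cd.exists_max_image (fun i => A.ex i (A.N (Y m) i - 1)) ⟨iT, hiTC⟩
  obtain ⟨hi'1, hi'2⟩ := (Finset.mem_filter.1 hi').2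
  -- a count grows by at most one, and the unit gained is smaller than the one lost there
  have gain : ∀ j ≤ m, ∀ b, A.N (Y j) b < A.N (Z j) b →
      A.N (Z j) b = A.N (Y j) b + 1 ∧ Y j b = Y m b - (m - j) ∧ A.N (Y j) b < A.n b ∧
      A.ex b (A.N (Y j) b) < A.ex i' (A.N (Y m) i' - 1) := by
    intro j hj b hlt
    have hz := hZ j hj
    have hY0 := (hYf j hj b).1
    have hzb : Z j b = u j b := (hz.2.2.2.1 b).resolve_right (by omega)
    have hle := hZY j hj (A.σ b)
    have hmul : (A.p : ℤ) * (Z j (A.σ b) - Y j (A.σ b)) ≤ 2 * (Z j (A.σ b) - Y j (A.σ b)) := by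
      nlinarith
    have hdiff : A.N (Z j) b - A.N (Y j) b
        = A.p * (Z j (A.σ b) - Y j (A.σ b)) + (Y j b - Z j b) := by unfold N; ring
    have huc := u_cases j hj b
    have hσ : Z j (A.σ b) = Y j (A.σ b) := by omega
    rw [hσ] at hdiff
    simp only [sub_self, mul_zero, zero_add] at hdiff
    have huc' : u j b = Y j b - 1 ∧ χ b = 1 ∧ Y j b = Y m b - (m - j) := by
      rcases huc with h | h
      · omega
      · exact h
    obtain ⟨e1, e2, e3⟩ := huc'
    have hN1 : A.N (Z j) b = A.N (Y j) b + 1 := by omega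
    have hσle : Y j (A.σ b) ≤ Y m (A.σ b) - χ (A.σ b) - (m - j) := by
      rw [← hσ]
      exact (show Z j (A.σ b) ≤ u j (A.σ b) from hz.2.1 _).trans (u_le _ _)
    have hh : A.N (Y j) b ≤ A.N (Y m) b - A.p * χ (A.σ b) - (A.p - 1) * (m - j) := by
      unfold N
      rw [e3]
      have := mul_le_mul_of_nonneg_left hσle (by omega : (0 : ℤ) ≤ A.p)
      linarith
    have hmj : (0 : ℤ) ≤ (A.p - 1) * (m - j) := mul_nonneg (by omega) (by omega)
    have hXb := (hXf m le_rfl b)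
    have hYb := (hYf m le_rfl b)
    have hDb : X m b < Y m b := by
      rcases χ0 b with h | h
      · omega
      · exact h.2
    refine ⟨hN1, e3, ?_⟩
    rcases χ0 (A.σ b) with ⟨h, h'⟩ | ⟨h, h'⟩
    · rw [h] at hh
      have hlt' : A.N (Y m) b < A.N (X m) b := by
        unfold N; rw [h']; omega
      have h4 := hT b hlt'
      have h5 := hmax iT hiTC
      have h6 := A.mono b (A.N (Y j) b) (A.N (Y m) b) hY0 (by omega) (by omega)
      exact ⟨by omega, by omega⟩
    · rw [h] at hh
      have hbC : b ∈ Cd := by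
        simp only [hCd, Finset.mem_filter, Finset.mem_univ, true_and]
        exact ⟨h', by omega⟩
      have h4 := A.strict b (A.N (Y j) b) hY0 (by omega)
      have h5 := A.mono b (A.N (Y j) b + (A.p - 1)) (A.N (Y m) b - 1) (by omega) (by omega)
        (by omega)
      have h6 := hmax b hbC
      exact ⟨by omega, by omega⟩
  have loss : A.N (Z m) i' ≤ A.N (Y m) i' - 1 := by
    have hz := hZ m le_rfl
    have h1 : Z m (A.σ i') ≤ Y m (A.σ i') - 1 := by
      have h2 : Z m (A.σ i') ≤ u m (A.σ i') := hz.2.1 _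
      have h3 := u_le m (A.σ i')
      rcases χ0 (A.σ i') with h | h <;> omega
    rcases hz.2.2.2.1 i' with h | h
    · have h2 := u_cases m le_rfl i'
      have h3 := mul_le_mul_of_nonneg_left h1 (by omega : (0 : ℤ) ≤ A.p)
      unfold N
      rw [mul_sub] at h3
      omega
    · omega
  refine ⟨Z, ⟨?_, ?_, ?_⟩, ?_⟩
  · intro j hj b
    refine ⟨(hZ j hj).2.2.1 b, ?_⟩
    by_cases h : A.N (Y j) b < A.N (Z j) b
    · have := gain j hj b h
      omega
    · have := hYf j hj b
      omega
  · intro j hj b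
    have hz := hZ j hj.le
    refine (hZ (j + 1) hj).2.2.2.2 (fun i => Z j i + 1) ?_ ?_ b
    · intro i
      have h1 : Z j i ≤ u j i := hz.2.1 i
      have h2 := hYc j hj i
      show Z j i + 1 ≤ u (j + 1) i
      simp only [hu] at h1 ⊢
      push_cast
      omega
    · intro i
      rw [N_add_const]
      have := hz.2.2.1 i
      omega
  · intro b
    exact (hZY m le_rfl b).trans (hYU b)
  · set S := Finset.range (m + 1) ×ˢ (Finset.univ : Finset I) with hS
    set Γ := S.filter fun x => A.N (Y x.1) x.2 < A.N (Z x.1) x.2 with hΓ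
    set t : ℕ × I → ℤ := fun x => A.G x.2 (A.N (Z x.1) x.2) - A.G x.2 (A.N (Y x.1) x.2) with ht
    have hmemΓ : ∀ x ∈ Γ, x.1 ≤ m ∧ A.N (Y x.1) x.2 < A.N (Z x.1) x.2 := by
      intro x hx
      simp only [hΓ, hS, Finset.mem_filter, Finset.mem_product, Finset.mem_range,
        Finset.mem_univ, and_true] at hx
      exact ⟨by omega, hx.2⟩
    have e1 : A.F m Z - A.F m Y = ∑ x ∈ S, t x := by
      unfold F g
      rw [hS, Finset.sum_product, ← Finset.sum_sub_distrib]
      apply Finset.sum_congr rfl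
      intro j _
      rw [← Finset.sum_sub_distrib]
    have e2 : ∑ x ∈ S, t x = ∑ x ∈ Γ, t x
        + ∑ x ∈ S.filter (fun x => ¬ A.N (Y x.1) x.2 < A.N (Z x.1) x.2), t x := by
      rw [hΓ, Finset.sum_filter_add_sum_filter_not]
    have e3 : ∑ x ∈ Γ, t x < (A.p : ℤ) ^ A.ex i' (A.N (Y m) i' - 1) := by
      have h1 : ∑ x ∈ Γ, t x = ∑ x ∈ Γ, (A.p : ℤ) ^ A.ex x.2 (A.N (Y x.1) x.2) := by
        apply Finset.sum_congr rfl
        intro x hx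
        obtain ⟨h1, h2⟩ := hmemΓ x hx
        obtain ⟨h3, -⟩ := gain x.1 h1 x.2 h2
        simp only [ht]
        rw [h3, A.G_succ _ (hYf _ h1 _).1]
        ring
      rw [h1]
      have h2 := A.digit_bound (Γ.image fun x => (x.2, A.N (Y x.1) x.2))
        (A.ex i' (A.N (Y m) i' - 1)) (by
          intro y hy
          rw [Finset.mem_image] at hy
          obtain ⟨x, hx, rfl⟩ := hy
          obtain ⟨h1, h2⟩ := hmemΓ x hx
          obtain ⟨-, -, h3, h4⟩ := gain x.1 h1 x.2 h2
          exact ⟨(hYf _ h1 _).1, h3, h4⟩)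
      rwa [Finset.sum_image] at h2
      -- units gained at different steps are different, so `digit_bound` applies to their union
      have key : ∀ x ∈ Γ, ∀ y ∈ Γ, x.2 = y.2 → x.1 < y.1 →
          A.N (Y x.1) x.2 ≠ A.N (Y y.1) y.2 := by
        rintro ⟨j, b⟩ hx ⟨j', b'⟩ hy hb hlt
        simp only at hb hlt ⊢
        subst hb
        obtain ⟨h1, h2⟩ := hmemΓ _ hx
        obtain ⟨h1', h2'⟩ := hmemΓ _ hy
        obtain ⟨-, h3, -⟩ := gain j h1 b h2
        obtain ⟨-, h3', -⟩ := gain j' h1' b h2'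
        have hc := chain hYc (A.σ b) hlt.le h1'
        have hc' := mul_le_mul_of_nonneg_left hc (by omega : (0 : ℤ) ≤ A.p)
        have : (0 : ℤ) < (A.p - 1) * (j' - j) := mul_pos (by omega) (by omega)
        unfold N
        rw [h3, h3']
        intro h
        linarith
      rintro x hx y hy hxy
      simp only [Prod.mk.injEq] at hxy
      have h3 : x.1 = y.1 := by
        rcases lt_trichotomy x.1 y.1 with h | h | h
        · exact absurd hxy.2 (key x hx y hy hxy.1 h)
        · exact h
        · exact absurd hxy.2.symm (key y hy x hx hxy.1.symm h)
      exact Prod.ext h3 hxy.1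
    have e4 : ∑ x ∈ S.filter (fun x => ¬ A.N (Y x.1) x.2 < A.N (Z x.1) x.2), t x
        ≤ - (A.p : ℤ) ^ A.ex i' (A.N (Y m) i' - 1) := by
      have hmem : (m, i') ∈ S.filter (fun x => ¬ A.N (Y x.1) x.2 < A.N (Z x.1) x.2) := by
        simp [hS]; omega
      have h1 := Finset.single_le_sum (f := fun x => - t x) (a := (m, i')) (s := S.filter (fun x => ¬ A.N (Y x.1) x.2 < A.N (Z x.1) x.2)) (by
        intro x hx
        simp only [hS, Finset.mem_filter, Finset.mem_product, Finset.mem_range,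
          Finset.mem_univ, and_true] at hx
        have := A.G_mono x.2 ((hZ x.1 (by omega)).2.2.1 x.2) (not_lt.1 hx.2)
        simp only [ht]
        omega) hmem
      rw [Finset.sum_neg_distrib] at h1
      have hz0 := (hZ m le_rfl).2.2.1 i'
      have h2 := A.G_succ i' (x := A.N (Y m) i' - 1) (by omega)
      have h3 := A.G_mono i' hz0 loss
      rw [sub_add_cancel] at h2
      simp only [ht] at h1
      linarith
    omega

end Data
end SheatsOpt

/-! ### Uniqueness and nestedness of optimal configurations -/

namespace SheatsOpt
variable {I : Type} [Fintype I] [DecidableEq I]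
namespace Data
variable (A : Data I)

lemma F_update {m j : ℕ} (hj : j ≤ m) (X : ℕ → I → ℤ) (c : I → ℤ) :
    A.F m (Function.update X j c) = A.F m X - A.g (X j) + A.g c := by
  unfold F
  have hj' : j ∈ Finset.range (m + 1) := by simp; omega
  rw [← Finset.add_sum_erase _ _ hj', ← Finset.add_sum_erase _ (fun j => A.g (X j)) hj']
  rw [Finset.sum_congr rfl (g := fun j => A.g (X j))]
  · simp
    ring
  · intro i hi
    rw [Function.update_of_ne (Finset.ne_of_mem_erase hi)]

lemma conf_update {m j : ℕ} {U : I → ℤ} {X : ℕ → I → ℤ} (hX : A.IsConf m U X)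
    {c : I → ℤ} (hc : A.Feas c) (hlow : ∀ i, i + 1 = j → ∀ b, X i b + 1 ≤ c b)
    (hup : j < m → ∀ b, c b + 1 ≤ X (j + 1) b) (htop : j = m → ∀ b, c b ≤ U b) :
    A.IsConf m U (Function.update X j c) := by
  obtain ⟨h1, h2, h3⟩ := hX
  refine ⟨?_, ?_, ?_⟩
  · intro i hi
    by_cases h : i = j
    · subst h; simpa using hc
    · rw [Function.update_of_ne h]; exact h1 i hi
  · intro i hi b
    by_cases h : i = j
    · subst h
      rw [Function.update_self, Function.update_of_ne (by omega)]
      exact hup hi b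
    · rw [Function.update_of_ne h]
      by_cases h' : i + 1 = j
      · subst h'
        rw [Function.update_self]
        exact hlow i rfl b
      · rw [Function.update_of_ne h']
        exact h2 i hi b
  · intro b
    by_cases h : m = j
    · subst h; simpa using htop rfl b
    · rw [Function.update_of_ne h]; exact h3 b

/-- Two optimal configurations have the same last vector: replacing one last vector by the supremum
shows through submodularity that the infimum configuration satisfies the hypotheses of `improve`
against one of the two. -/
lemma opt_top {m : ℕ} {U : I → ℤ} {X Y : ℕ → I → ℤ} (hX : A.IsOpt m U X) (hY : A.IsOpt m U Y) :
    X m = Y m := by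
  by_contra hne
  have aux : ∀ {X Y : ℕ → I → ℤ}, A.IsOpt m U X → A.IsOpt m U Y →
      A.g (X m ⊓ Y m) ≤ A.g (Y m) := by
    intro X Y hX hY
    have hf := A.feas_sup (hX.1.1 m le_rfl) (hY.1.1 m le_rfl)
    have hc : A.IsConf m U (Function.update X m (X m ⊔ Y m)) := by
      apply A.conf_update hX.1 hf
      · intro i hi b
        have := hX.1.2.1 i (by omega) b
        rw [hi] at this
        exact this.trans le_sup_left
      · intro h; omega
      · intro _ b
        exact sup_le (hX.1.2.2 b) (hY.1.2.2 b)
    have h1 := hX.2 _ hc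
    rw [A.F_update le_rfl] at h1
    have h2 := A.g_submod (hX.1.1 m le_rfl) (hY.1.1 m le_rfl)
    omega
  have hW : A.IsConf m U (fun j => X j ⊓ Y j) := by
    refine ⟨fun j hj => A.feas_inf (hX.1.1 j hj) (hY.1.1 j hj), ?_, ?_⟩
    · intro j hj b
      have h1 := hX.1.2.1 j hj b
      have h2 := hY.1.2.1 j hj b
      simp only [Pi.inf_apply]
      omega
    · intro b
      exact inf_le_left.trans (hX.1.2.2 b)
  by_cases h : X m ⊓ Y m = Y m
  · have h' : X m ⊓ Y m ≠ X m := by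
      intro h''
      exact hne (h''.symm.trans h)
    obtain ⟨Z, hZ, hlt⟩ := A.improve hW hX.1 (fun j _ => inf_le_left) h' (by
      have := aux hY hX
      rwa [inf_comm] at this)
    have := hX.2 Z hZ
    omega
  · obtain ⟨Z, hZ, hlt⟩ := A.improve hW hY.1 (fun j _ => inf_le_right) h (aux hX hY)
    have := hY.2 Z hZ
    omega

lemma opt_trunc {m : ℕ} {U : I → ℤ} {X : ℕ → I → ℤ} (hX : A.IsOpt (m + 1) U X) :
    A.IsOpt m (fun b => X (m + 1) b - 1) X := by
  obtain ⟨⟨h1, h2, h3⟩, h4⟩ := hX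
  refine ⟨⟨fun j hj => h1 j (by omega), fun j hj => h2 j (by omega), ?_⟩, ?_⟩
  · intro b
    have := h2 m (by omega) b
    simp only
    omega
  · intro c' hc'
    have hF : ∀ c, A.F (m + 1) c = A.F m c + A.g (c (m + 1)) := fun c => Finset.sum_range_succ _ _
    have := h4 (Function.update c' (m + 1) (X (m + 1))) (by
      refine ⟨?_, ?_, ?_⟩
      · intro j hj
        by_cases h : j = m + 1
        · subst h; simpa using h1 _ le_rfl
        · rw [Function.update_of_ne h]; exact hc'.1 j (by omega)
      · intro j hj b
        rw [Function.update_of_ne (by omega)]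
        by_cases h : j = m
        · subst h
          rw [Function.update_self]
          have := hc'.2.2 b
          simp only at this
          omega
        · rw [Function.update_of_ne (by omega)]
          exact hc'.2.1 j (by omega) b
      · intro b
        simpa using h3 b)
    rw [hF, hF, Function.update_self] at this
    have e : A.F m (Function.update c' (m + 1) (X (m + 1))) = A.F m c' := by
      unfold F
      apply Finset.sum_congr rfl
      intro j hj
      rw [Finset.mem_range] at hj
      rw [Function.update_of_ne (by omega)]
    omega

theorem opt_unique {m : ℕ} : ∀ {U : I → ℤ} {X Y : ℕ → I → ℤ}, A.IsOpt m U X → A.IsOpt m U Y →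
    ∀ j ≤ m, X j = Y j := by
  induction m with
  | zero =>
    intro U X Y hX hY j hj
    obtain rfl : j = 0 := by omega
    exact A.opt_top hX hY
  | succ m ih =>
    intro U X Y hX hY j hj
    have ht := A.opt_top hX hY
    by_cases h : j = m + 1
    · subst h; exact ht
    · have h1 := A.opt_trunc hX
      have h2 := A.opt_trunc hY
      rw [ht] at h1
      exact ih h1 h2 j (by omega)

lemma G_nonneg (b : I) (x : ℤ) : 0 ≤ A.G b x := Finset.sum_nonneg fun _ _ => by positivity

lemma F_nonneg (m : ℕ) (c : ℕ → I → ℤ) : 0 ≤ A.F m c :=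
  Finset.sum_nonneg fun _ _ => Finset.sum_nonneg fun _ _ => A.G_nonneg _ _

theorem exists_opt {m : ℕ} {U : I → ℤ} (h : ∃ c, A.IsConf m U c) : ∃ c, A.IsOpt m U c := by
  obtain ⟨z, ⟨c, hc, rfl⟩, hz⟩ := Int.exists_least_of_bdd (P := fun z => ∃ c, A.IsConf m U c ∧ A.F m c = z)
    ⟨0, by rintro z ⟨c, -, rfl⟩; exact A.F_nonneg m c⟩ (by obtain ⟨c, hc⟩ := h; exact ⟨_, c, hc, rfl⟩)
  exact ⟨c, hc, fun c' hc' => hz _ ⟨c', hc', rfl⟩⟩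

/-- An exchange vector: `v` is small enough to move from one vector of a chain to the next lower one
(`w` being their difference) so that all differences of counts stay between the old ones. It is a
minimal element of a suitable finite set of vectors. -/
lemma exists_exchange (w : I → ℤ) (hw : ∀ t, 1 ≤ w t) (l : I) (hl : A.p * w (A.σ l) - w l < 0) :
    ∃ v : I → ℤ, 0 ≤ v ∧ (∀ t, v t + 1 ≤ w t) ∧ 1 ≤ v l ∧ ∀ t,
      (0 ≤ A.p * v (A.σ t) - v t ∧ A.p * v (A.σ t) - v t ≤ max (A.p * w (A.σ t) - w t) 0) ∨
      (A.p * w (A.σ t) - w t ≤ A.p * v (A.σ t) - v t ∧ A.p * v (A.σ t) - v t ≤ 0) := by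
  have hp := A.pZ
  set Δ : I → ℤ := fun t => A.p * w (A.σ t) - w t with hΔ
  have hlσ : A.σ l ≠ l := by
    intro h
    rw [h] at hl
    have := hw l
    nlinarith
  set K := (Finset.Icc (0 : I → ℤ) (fun t => w t - 1)).filter fun v => 1 ≤ v l ∧ v (A.σ l) = 0 ∧
    ∀ t, t ≠ l → A.p * v (A.σ t) - v t ≤ max (Δ t) 0 with hK
  have hmemK : ∀ v, v ∈ K ↔ (∀ t, 0 ≤ v t ∧ v t ≤ w t - 1) ∧ 1 ≤ v l ∧ v (A.σ l) = 0 ∧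
    ∀ t, t ≠ l → A.p * v (A.σ t) - v t ≤ max (Δ t) 0 := by
    intro v
    simp only [hK, Finset.mem_filter, Finset.mem_Icc, Pi.le_def, Pi.zero_apply, forall_and]
  have hne : K.Nonempty := by
    refine ⟨fun t => max 0 (w t - w (A.σ l)), ?_⟩
    rw [hmemK]
    refine ⟨?_, ?_, ?_, ?_⟩
    · intro t
      have := hw t
      have := hw (A.σ l)
      omega
    · have := hw (A.σ l)
      have : w (A.σ l) ≤ A.p * w (A.σ l) := by nlinarith
      omega
    · simp
    · intro t _
      have hW := hw (A.σ l)
      rcases le_total (w (A.σ t)) (w (A.σ l)) with h | h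
      · rw [max_eq_left (a := 0) (b := w (A.σ t) - w (A.σ l)) (by omega)]
        omega
      · rw [max_eq_right (a := 0) (b := w (A.σ t) - w (A.σ l)) (by omega)]
        have h1 : w t - w (A.σ l) ≤ max 0 (w t - w (A.σ l)) := le_max_right _ _
        have h2 : Δ t ≤ max (Δ t) 0 := le_max_left _ _
        have h3 : A.p * (w (A.σ t) - w (A.σ l)) - (w t - w (A.σ l)) ≤ Δ t := by
          simp only [hΔ]
          nlinarith
        omega
  obtain ⟨v, hv⟩ := K.exists_minimal hne
  obtain ⟨hv1, hv2, hv3, hv4⟩ := (hmemK v).1 hv.1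
  have dec : ∀ t, 1 ≤ v t → ¬ Function.update v t (v t - 1) ∈ K := by
    intro t ht hmem
    have := hv.2 hmem (by
      intro i
      by_cases h : i = t
      · subst h; simp
      · simp [h])
    have := this t
    simp at this
  have dle : ∀ t i, Function.update v t (v t - 1) i ≤ v i := by
    intro t i
    by_cases h : i = t
    · subst h; simp
    · simp [h]
  have dmul : ∀ t i, A.p * Function.update v t (v t - 1) i ≤ A.p * v i := fun t i =>
    mul_le_mul_of_nonneg_left (dle t i) (by omega)
  have hvl : v l = 1 := by
    by_contra hcon
    apply dec l hv2
    rw [hmemK]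
    refine ⟨?_, ?_, ?_, ?_⟩
    · intro t
      have := hv1 t
      refine ⟨?_, (dle l t).trans this.2⟩
      by_cases h : t = l
      · subst h; simp; omega
      · simp [h]; omega
    · simp; omega
    · rw [Function.update_of_ne hlσ, hv3]
    · intro t ht
      have h1 := dmul l (A.σ t)
      have h2 := hv4 t ht
      rw [Function.update_of_ne ht]
      omega
  have hvt : ∀ t, t ≠ l → v t = 0 ∨ A.p * v (A.σ t) - v t = max (Δ t) 0 := by
    intro t ht
    by_contra hcon
    push Not at hcon
    have h0 := hv1 t
    have hlt := lt_of_le_of_ne (hv4 t ht) hcon.2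
    apply dec t (by omega)
    rw [hmemK]
    refine ⟨?_, ?_, ?_, ?_⟩
    · intro i
      have := hv1 i
      refine ⟨?_, (dle t i).trans this.2⟩
      by_cases h : i = t
      · subst h; simp; omega
      · simp [h]; omega
    · rw [Function.update_of_ne (Ne.symm ht)]; exact hv2
    · rw [Function.update_of_ne, hv3]
      rintro rfl
      omega
    · intro i hi
      have h1 := dmul t (A.σ i)
      have h2 := hv4 i hi
      by_cases h : i = t
      · subst h
        simp only [Function.update_self] at h1 ⊢
        omega
      · rw [Function.update_of_ne h]
        omega
  refine ⟨v, fun t => (hv1 t).1, fun t => by have := hv1 t; omega, hv2, ?_⟩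
  intro t
  by_cases h : t = l
  · subst h
    right
    rw [hv3, hvl]
    simp only [mul_zero]
    omega
  · left
    refine ⟨?_, hv4 t h⟩
    rcases hvt t h with h' | h'
    · rw [h']
      have := (hv1 (A.σ t)).1
      have := mul_nonneg (by omega : (0 : ℤ) ≤ A.p) this
      omega
    · omega

/-- In an optimal configuration the counts increase along the chain; otherwise an exchange between
two consecutive vectors would not increase the cost, contradicting `opt_unique`. -/
theorem opt_nested {m : ℕ} {U : I → ℤ} {C : ℕ → I → ℤ} (hC : A.IsOpt m U C) {j : ℕ} (hj : j < m)
    (l : I) : A.N (C j) l ≤ A.N (C (j + 1)) l := by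
  by_contra hcon
  push Not at hcon
  have hN : ∀ (x y : I → ℤ) b, A.N (fun t => x t + y t) b = A.N x b + (A.p * y (A.σ b) - y b) := by
    intro x y b; unfold N; ring
  set w : I → ℤ := fun t => C (j + 1) t - C j t with hw
  have hΔ : ∀ b, A.p * w (A.σ b) - w b = A.N (C (j + 1)) b - A.N (C j) b := by
    intro b; simp only [hw]; unfold N; ring
  obtain ⟨v, hv0, hvw, hvl, hv⟩ := A.exists_exchange w (fun t => by
    have := hC.1.2.1 j hj t
    simp only [hw]; omega) l (by rw [hΔ]; omega)
  set c := fun t => C j t + v t with hc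
  set c' := fun t => C (j + 1) t + - v t with hc'
  have hNc : ∀ b, A.N c b = A.N (C j) b + (A.p * v (A.σ b) - v b) := fun b => hN _ _ b
  have hNc' : ∀ b, A.N c' b = A.N (C (j + 1)) b - (A.p * v (A.σ b) - v b) := by
    intro b
    have := hN (C (j + 1)) (fun t => - v t) b
    simp only [hc']
    rw [this]
    ring
  have hf := hC.1.1 j hj.le
  have hf' := hC.1.1 (j + 1) hj
  have hcf : A.Feas c := by
    intro b
    have h1 := hf b
    have h2 := hf' b
    have h3 := hNc b
    have h4 := hv b
    rw [hΔ] at h4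
    omega
  have hcf' : A.Feas c' := by
    intro b
    have h1 := hf b
    have h2 := hf' b
    have h3 := hNc' b
    have h4 := hv b
    rw [hΔ] at h4
    omega
  have hg : A.g c + A.g c' ≤ A.g (C j) + A.g (C (j + 1)) := by
    unfold g
    rw [← Finset.sum_add_distrib, ← Finset.sum_add_distrib]
    apply Finset.sum_le_sum
    intro b _
    have h1 := hf b
    have h2 := hf' b
    have h3 := hNc b
    have h3' := hNc' b
    have h4 := hv b
    rw [hΔ] at h4
    rcases le_total (A.N (C j) b) (A.N (C (j + 1)) b) with h | h
    · exact A.G_convex b h1.1 h2.2 (by omega) (by omega) (by omega)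
    · rw [add_comm (A.G b (A.N (C j) b))]
      exact A.G_convex b h2.1 h1.2 (by omega) (by omega) (by omega)
  have strict : ∀ (i : ℕ) (x : I → ℤ), i ≤ m → A.IsConf m U (Function.update C i x) → x ≠ C i →
      A.g (C i) < A.g x := by
    intro i x hi hx hne
    have h1 := hC.2 _ hx
    have h2 := A.F_update hi C x
    by_contra hlt
    have hopt : A.IsOpt m U (Function.update C i x) :=
      ⟨hx, fun y hy => by have := hC.2 y hy; omega⟩
    have := A.opt_unique hopt hC i hi
    rw [Function.update_self] at this
    exact hne this
  have s1 := strict j c hj.le (by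
    apply A.conf_update hC.1 hcf
    · intro i hi b
      subst hi
      have h1 := hC.1.2.1 i (by omega) b
      have : 0 ≤ v b := hv0 b
      simp only [hc]; omega
    · intro _ b
      have := hvw b
      simp only [hw] at this
      simp only [hc]; omega
    · intro h; omega) (by
    intro h
    have := congrFun h l
    simp only [hc] at this; omega)
  have s2 := strict (j + 1) c' hj (by
    apply A.conf_update hC.1 hcf'
    · intro i hi b
      obtain rfl : i = j := by omega
      have := hvw b
      simp only [hw] at this
      simp only [hc']; omega
    · intro h b
      have h1 := hC.1.2.1 (j + 1) h b
      have : 0 ≤ v b := hv0 b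
      simp only [hc']; omega
    · intro h b
      have h1 := hC.1.2.2 b
      rw [← h] at h1
      have : 0 ≤ v b := hv0 b
      simp only [hc']; omega) (by
    intro h
    have := congrFun h l
    simp only [hc'] at this; omega)
  omega

end Data
end SheatsOpt

/-! ### The stock of units formed by the digits of an integer -/

namespace SheatsOpt

/-- The base-`p` digit of `k` at position `e`. -/
def dig (p k e : ℕ) : ℕ := k / p ^ e % p

lemma dig_lt {p : ℕ} (hp : 2 ≤ p) (k e : ℕ) : dig p k e < p := Nat.mod_lt _ (by omega)

/-- The sum of the base-`p` digits of `k` at the positions `e < E` with `e ≡ τ` modulo `f`. -/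
def cum (p f k : ℕ) (τ : ZMod f) (E : ℕ) : ℤ :=
  ∑ e ∈ Finset.range E, if (e : ZMod f) = τ then (dig p k e : ℤ) else 0

lemma cum_succ (p f k : ℕ) (τ : ZMod f) (E : ℕ) :
    cum p f k τ (E + 1) = cum p f k τ E + if (E : ZMod f) = τ then (dig p k E : ℤ) else 0 :=
  Finset.sum_range_succ _ _

lemma cum_zero (p f k : ℕ) (τ : ZMod f) : cum p f k τ 0 = 0 := rfl

lemma cum_mono (p f k : ℕ) (τ : ZMod f) : Monotone (cum p f k τ) := by
  apply monotone_nat_of_le_succ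
  intro E
  rw [cum_succ]
  split_ifs <;> omega

/-- Writing the digits of `k` at positions congruent to `τ` as `cum p f k τ k` units of sizes `p ^ e`
in increasing order, the exponent of the unit number `h`. It is `0` by convention if there is no
such unit. -/
noncomputable def unitExp (p f k : ℕ) (τ : ZMod f) (h : ℤ) : ℕ :=
  sInf {E : ℕ | h < cum p f k τ (E + 1)}

lemma unitExp_spec {p f k : ℕ} {τ : ZMod f} {h : ℤ} (h0 : 0 ≤ h) (hn : h < cum p f k τ k) :
    cum p f k τ (unitExp p f k τ h) ≤ h ∧ h < cum p f k τ (unitExp p f k τ h + 1) := by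
  have hne : {E : ℕ | h < cum p f k τ (E + 1)}.Nonempty := by
    refine ⟨k, ?_⟩
    exact lt_of_lt_of_le hn (cum_mono p f k τ (by omega))
  refine ⟨?_, Nat.sInf_mem hne⟩
  rcases Nat.eq_zero_or_pos (unitExp p f k τ h) with h1 | h1
  · rw [h1, cum_zero]; exact h0
  · have := Nat.notMem_of_lt_sInf (show unitExp p f k τ h - 1 < sInf {E : ℕ | h < cum p f k τ (E + 1)} by
      show unitExp p f k τ h - 1 < unitExp p f k τ h
      omega)
    simp only [Set.mem_ofPred_eq, not_lt] at this
    rwa [Nat.sub_add_cancel h1] at this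

lemma unitExp_eq_iff {p f k : ℕ} {τ : ZMod f} {h : ℤ} (h0 : 0 ≤ h) (hn : h < cum p f k τ k) (e : ℕ) :
    e = unitExp p f k τ h ↔ cum p f k τ e ≤ h ∧ h < cum p f k τ (e + 1) := by
  constructor
  · rintro rfl; exact unitExp_spec h0 hn
  · rintro ⟨h1, h2⟩
    obtain ⟨h3, h4⟩ := unitExp_spec h0 hn
    by_contra hne
    rcases lt_or_gt_of_ne hne with hlt | hlt
    · have := cum_mono p f k τ (show e + 1 ≤ unitExp p f k τ h from hlt)
      omega
    · have := cum_mono p f k τ (show unitExp p f k τ h + 1 ≤ e from hlt)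
      omega

lemma unitExp_type {p f k : ℕ} {τ : ZMod f} {h : ℤ} (h0 : 0 ≤ h) (hn : h < cum p f k τ k) :
    (unitExp p f k τ h : ZMod f) = τ := by
  obtain ⟨h3, h4⟩ := unitExp_spec h0 hn
  rw [cum_succ] at h4
  by_contra hne
  rw [if_neg hne] at h4
  omega

lemma unitExp_lt {p f k : ℕ} {τ : ZMod f} {h : ℤ} (h0 : 0 ≤ h) (hn : h < cum p f k τ k) :
    unitExp p f k τ h < k := by
  obtain ⟨h3, h4⟩ := unitExp_spec h0 hn
  by_contra hle
  have := cum_mono p f k τ (show k ≤ unitExp p f k τ h by omega)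
  omega

/-- The stock of units formed by the base-`p` digits of `k`, the type of a unit of size `p ^ e` being
the class of `e` modulo `f`. -/
noncomputable def digitData (p f k : ℕ) (hp : 2 ≤ p) : Data (ZMod f) where
  σ := Equiv.addRight 1
  p := p
  hp := hp
  r := fun τ => cum p f k τ k
  n := fun τ => cum p f k τ k
  ex := unitExp p f k
  mono := by
    intro b h h' h0 hh hn
    obtain ⟨h1, h2⟩ := unitExp_spec h0 (by omega : h < cum p f k b k)
    obtain ⟨h3, h4⟩ := unitExp_spec (by omega : 0 ≤ h') hn
    by_contra hlt
    have := cum_mono p f k b (show unitExp p f k b h' + 1 ≤ unitExp p f k b h by omega)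
    omega
  inj := by
    intro b b' h h' h0 hn h0' hn' he
    rw [← unitExp_type h0 hn, ← unitExp_type h0' hn', he]
  strict := by
    intro b h h0 hn
    obtain ⟨h1, h2⟩ := unitExp_spec h0 (by omega : h < cum p f k b k)
    obtain ⟨h3, h4⟩ := unitExp_spec (by omega : 0 ≤ h + (p - 1)) hn
    by_contra hlt
    have := cum_mono p f k b (show unitExp p f k b (h + (p - 1)) + 1 ≤ unitExp p f k b h + 1 by omega)
    have h5 := cum_succ p f k b (unitExp p f k b h)
    have h6 := dig_lt hp k (unitExp p f k b h)
    split_ifs at h5 <;> omega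

/-- The number of units of size `p ^ e` among the `N` smallest units of type `τ`. -/
def greedy (p f k : ℕ) (τ : ZMod f) (N : ℤ) (e : ℕ) : ℤ :=
  min (cum p f k τ (e + 1)) N - min (cum p f k τ e) N

lemma greedy_of_ne {p f k : ℕ} {τ : ZMod f} {e : ℕ} (h : (e : ZMod f) ≠ τ) (N : ℤ) :
    greedy p f k τ N e = 0 := by
  unfold greedy; rw [cum_succ, if_neg h]; simp

lemma sum_greedy {p f k : ℕ} {τ : ZMod f} {N : ℤ} (h0 : 0 ≤ N) (hN : N ≤ cum p f k τ k) :
    ∑ e ∈ Finset.range k, greedy p f k τ N e = N := by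
  unfold greedy
  rw [Finset.sum_range_sub (fun e => min (cum p f k τ e) N), cum_zero]
  omega

lemma greedy_mono {p f k : ℕ} {τ : ZMod f} {N N' : ℤ} (h : N ≤ N') (e : ℕ) :
    greedy p f k τ N e ≤ greedy p f k τ N' e := by
  have := cum_mono p f k τ (Nat.le_succ e)
  unfold greedy
  simp only [Nat.succ_eq_add_one] at this
  omega

lemma greedy_zero {p f k : ℕ} {τ : ZMod f} (e : ℕ) : greedy p f k τ 0 e = 0 := by
  have h1 := cum_mono p f k τ (Nat.zero_le (e + 1))
  have h2 := cum_mono p f k τ (Nat.zero_le e)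
  rw [cum_zero] at h1 h2
  unfold greedy
  omega

lemma greedy_full {p f k : ℕ} {e : ℕ} (he : e < k) :
    greedy p f k (e : ZMod f) (cum p f k e k) e = dig p k e := by
  have h1 := cum_mono p f k (e : ZMod f) (show e + 1 ≤ k from he)
  have h2 := cum_mono p f k (e : ZMod f) (show e ≤ k by omega)
  have h3 := cum_succ p f k (e : ZMod f) e
  simp only [if_true] at h3
  unfold greedy
  omega

lemma G_eq_greedy {p f k : ℕ} [NeZero f] (hp : 2 ≤ p) {τ : ZMod f} {N : ℤ} (h0 : 0 ≤ N)
    (hN : N ≤ cum p f k τ k) :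
    (digitData p f k hp).G τ N = ∑ e ∈ Finset.range k, greedy p f k τ N e * (p : ℤ) ^ e := by
  induction N, h0 using Int.leInduction with
  | base => simp [Data.G, greedy_zero]
  | succ N h0 ih =>
    rw [Data.G_succ _ _ h0, ih (by omega)]
    have hu := unitExp_lt h0 (show N < cum p f k τ k by omega)
    have : ∀ e ∈ Finset.range k, greedy p f k τ (N + 1) e * (p : ℤ) ^ e
        = greedy p f k τ N e * (p : ℤ) ^ e + if e = unitExp p f k τ N then (p : ℤ) ^ e else 0 := by
      intro e _
      have h1 := unitExp_eq_iff h0 (show N < cum p f k τ k by omega) e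
      have h2 := cum_mono p f k τ (Nat.le_succ e)
      simp only [Nat.succ_eq_add_one] at h2
      by_cases h : e = unitExp p f k τ N
      · rw [if_pos h]
        have h3 := h1.1 h
        have : greedy p f k τ (N + 1) e = greedy p f k τ N e + 1 := by unfold greedy; omega
        rw [this]; ring
      · rw [if_neg h]
        have h3 := mt h1.2 h
        have : greedy p f k τ (N + 1) e = greedy p f k τ N e := by unfold greedy; omega
        rw [this]; ring
    rw [Finset.sum_congr rfl this, Finset.sum_add_distrib, Finset.sum_ite_eq' (Finset.range k),
      if_pos (Finset.mem_range.2 hu)]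
    rfl

/-- Among all selections of `N` units of type `τ`, the `N` smallest ones have the least total size,
and a selection of least size agrees with the greedy one. -/
lemma G_le_of_digits {p f k : ℕ} [NeZero f] (hp : 2 ≤ p) {τ : ZMod f} {N : ℤ} (ρ : ℕ → ℤ)
    (hρ : ∀ e < k, 0 ≤ ρ e ∧ ρ e ≤ if (e : ZMod f) = τ then (dig p k e : ℤ) else 0)
    (hN : ∑ e ∈ Finset.range k, ρ e = N) :
    (digitData p f k hp).G τ N ≤ ∑ e ∈ Finset.range k, ρ e * (p : ℤ) ^ e ∧
    (∑ e ∈ Finset.range k, ρ e * (p : ℤ) ^ e ≤ (digitData p f k hp).G τ N →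
      ∀ e < k, ρ e = greedy p f k τ N e) := by
  have h0 : 0 ≤ N := by
    rw [← hN]; exact Finset.sum_nonneg fun e he => (hρ e (Finset.mem_range.1 he)).1
  have hNn : N ≤ cum p f k τ k := by
    rw [← hN]; exact Finset.sum_le_sum fun e he => (hρ e (Finset.mem_range.1 he)).2
  rw [G_eq_greedy hp h0 hNn]
  have hsg := sum_greedy h0 hNn
  rcases h0.eq_or_lt with h00 | hpos
  · subst h00
    have hz : ∀ e < k, ρ e = 0 := by
      intro e he
      exact (Finset.sum_eq_zero_iff_of_nonneg
        (fun e he => (hρ e (Finset.mem_range.1 he)).1)).1 hN e (Finset.mem_range.2 he)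
    refine ⟨?_, fun _ e he => by rw [hz e he, greedy_zero]⟩
    apply Finset.sum_le_sum
    intro e he
    rw [greedy_zero, hz e (Finset.mem_range.1 he)]
  · set θ := unitExp p f k τ (N - 1) with hθ
    obtain ⟨s1, s2⟩ := unitExp_spec (show 0 ≤ N - 1 by omega) (show N - 1 < cum p f k τ k by omega)
    have hθk := unitExp_lt (show 0 ≤ N - 1 by omega) (show N - 1 < cum p f k τ k by omega)
    rw [← hθ] at s1 s2 hθk
    have lowθ : ∀ e < θ, greedy p f k τ N e = if (e : ZMod f) = τ then (dig p k e : ℤ) else 0 := by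
      intro e he
      have h1 := cum_mono p f k τ (show e + 1 ≤ θ from he)
      have h2 := cum_mono p f k τ (show e ≤ θ by omega)
      have h3 := cum_succ p f k τ e
      unfold greedy
      omega
    have highθ : ∀ e, θ < e → greedy p f k τ N e = 0 := by
      intro e he
      have h1 := cum_mono p f k τ (show θ + 1 ≤ e from he)
      have h2 := cum_mono p f k τ (show θ + 1 ≤ e + 1 by omega)
      unfold greedy
      omega
    have hpz : (1 : ℤ) < p := by exact_mod_cast (by omega : 1 < p)
    have term : ∀ e ∈ Finset.range k, 0 ≤ (ρ e - greedy p f k τ N e) * ((p : ℤ) ^ e - (p : ℤ) ^ θ) := by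
      intro e he
      have hr := hρ e (Finset.mem_range.1 he)
      rcases lt_trichotomy e θ with h | h | h
      · apply mul_nonneg_of_nonpos_of_nonpos
        · rw [lowθ e h]; omega
        · have := pow_le_pow_right₀ hpz.le h.le
          omega
      · rw [h]; simp
      · apply mul_nonneg
        · rw [highθ e h]; omega
        · have := pow_le_pow_right₀ hpz.le h.le
          omega
    have key : ∑ e ∈ Finset.range k, (ρ e - greedy p f k τ N e) * ((p : ℤ) ^ e - (p : ℤ) ^ θ)
        = ∑ e ∈ Finset.range k, ρ e * (p : ℤ) ^ e
          - ∑ e ∈ Finset.range k, greedy p f k τ N e * (p : ℤ) ^ e := by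
      have : ∀ e ∈ Finset.range k, (ρ e - greedy p f k τ N e) * ((p : ℤ) ^ e - (p : ℤ) ^ θ)
          = (ρ e * (p : ℤ) ^ e - greedy p f k τ N e * (p : ℤ) ^ e)
            - (ρ e - greedy p f k τ N e) * (p : ℤ) ^ θ := by
        intros; ring
      rw [Finset.sum_congr rfl this, Finset.sum_sub_distrib, Finset.sum_sub_distrib,
        ← Finset.sum_mul, Finset.sum_sub_distrib, hN, hsg]
      ring
    have hnn := Finset.sum_nonneg term
    refine ⟨by omega, fun hle => ?_⟩
    have hzero := (Finset.sum_eq_zero_iff_of_nonneg term).1 (by omega)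
    have hne : ∀ e < k, e ≠ θ → ρ e = greedy p f k τ N e := by
      intro e he hneq
      have := hzero e (Finset.mem_range.2 he)
      rcases mul_eq_zero.1 this with h | h
      · omega
      · exact absurd (pow_right_injective₀ (by omega : (0 : ℤ) < p) (by omega) (sub_eq_zero.1 h)) hneq
    intro e he
    by_cases h : e = θ
    · subst h
      have h1 : ∑ e ∈ Finset.range k, (ρ e - greedy p f k τ N e) = 0 := by
        rw [Finset.sum_sub_distrib, hN, hsg, sub_self]
      rw [Finset.sum_eq_single θ] at h1
      · omega
      · intro b hb hbne
        rw [hne b (Finset.mem_range.1 hb) hbne, sub_self]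
      · intro h; exact absurd (Finset.mem_range.2 hθk) h
    · exact hne e he h

end SheatsOpt

/-! ### Cyclic sums -/

namespace SheatsOpt

/-- The weighted sum of type counts in which the type `τ + j`, `0 ≤ j < f`, has weight `p ^ j`.
For `τ = 0` it is the reduction modulo `p ^ f - 1` of the total size of the units counted. -/
def cyc (p : ℕ) {f : ℕ} [NeZero f] (τ : ZMod f) (N : ZMod f → ℤ) : ℤ :=
  ∑ σ, (p : ℤ) ^ (σ - τ).val * N σ

lemma val_step (p : ℕ) {f : ℕ} [NeZero f] (x : ZMod f) :
    (p : ℤ) * (p : ℤ) ^ (x - 1).val = (p : ℤ) ^ x.val + if x = 0 then (p : ℤ) ^ f - 1 else 0 := by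
  have hf := NeZero.pos f
  have h1 : x.val = ((x - 1).val + 1) % f := by
    conv_lhs => rw [← sub_add_cancel x 1]
    rw [ZMod.val_add, ZMod.val_one_eq_one_mod, Nat.add_mod_mod]
  have h2 := ZMod.val_lt (x - 1)
  rcases Nat.lt_or_ge ((x - 1).val + 1) f with h | h
  · rw [Nat.mod_eq_of_lt h] at h1
    have hx : x ≠ 0 := by
      rintro rfl
      rw [ZMod.val_zero] at h1
      omega
    rw [if_neg hx, h1, pow_succ]
    ring
  · have h3 : (x - 1).val + 1 = f := by omega
    rw [h3, Nat.mod_self] at h1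
    have hx : x = 0 := (ZMod.val_eq_zero x).1 h1
    rw [if_pos hx, h1, ← pow_succ', h3]
    ring

lemma cyc_step (p : ℕ) {f : ℕ} [NeZero f] (τ : ZMod f) (N : ZMod f → ℤ) :
    (p : ℤ) * cyc p (τ + 1) N = cyc p τ N + ((p : ℤ) ^ f - 1) * N τ := by
  unfold cyc
  rw [Finset.mul_sum]
  have : ∀ σ ∈ Finset.univ, (p : ℤ) * ((p : ℤ) ^ (σ - (τ + 1)).val * N σ)
      = (p : ℤ) ^ (σ - τ).val * N σ + if σ = τ then ((p : ℤ) ^ f - 1) * N σ else 0 := by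
    intro σ _
    have h := val_step p (σ - τ)
    rw [← mul_assoc, ← sub_sub, h]
    simp only [sub_eq_zero]
    split_ifs <;> ring
  rw [Finset.sum_congr rfl this, Finset.sum_add_distrib, Finset.sum_ite_eq' Finset.univ]
  simp

/-- The linear system `p * c (σ + 1) - c σ` is inverted by `cyc`, up to the factor `p ^ f - 1`. -/
lemma cyc_of_diff (p : ℕ) {f : ℕ} [NeZero f] (τ : ZMod f) (c : ZMod f → ℤ) :
    cyc p τ (fun σ => p * c (σ + 1) - c σ) = ((p : ℤ) ^ f - 1) * c τ := by
  unfold cyc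
  have e1 : ∑ σ : ZMod f, (p : ℤ) ^ (σ - τ).val * (p * c (σ + 1))
      = ∑ σ : ZMod f, (p : ℤ) ^ (σ - 1 - τ).val * (p * c σ) := by
    rw [← Equiv.sum_comp (Equiv.addRight (1 : ZMod f))
      (fun σ => (p : ℤ) ^ (σ - 1 - τ).val * (p * c σ))]
    simp
  simp only [mul_sub]
  rw [Finset.sum_sub_distrib, e1, ← Finset.sum_sub_distrib]
  have : ∀ σ ∈ Finset.univ, (p : ℤ) ^ (σ - 1 - τ).val * (p * c σ) - (p : ℤ) ^ (σ - τ).val * c σ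
      = if σ = τ then ((p : ℤ) ^ f - 1) * c σ else 0 := by
    intro σ _
    have h := val_step p (σ - τ)
    rw [sub_right_comm] at h
    simp only [sub_eq_zero] at h
    have : (p : ℤ) ^ (σ - 1 - τ).val * (p * c σ) = (p * (p : ℤ) ^ (σ - 1 - τ).val) * c σ := by ring
    rw [this, h]
    split_ifs <;> ring
  rw [Finset.sum_congr rfl this, Finset.sum_ite_eq' Finset.univ]
  simp

lemma cyc_dvd {p f : ℕ} [NeZero f] {N : ZMod f → ℤ} (h : ((p : ℤ) ^ f - 1) ∣ cyc p 0 N)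
    (τ : ZMod f) : ((p : ℤ) ^ f - 1) ∣ cyc p τ N := by
  have key : ∀ m : ℕ, ((p : ℤ) ^ f - 1) ∣ cyc p (-(m : ZMod f)) N := by
    intro m
    induction m with
    | zero => simpa using h
    | succ m ih =>
      have h1 := cyc_step p (-((m + 1 : ℕ) : ZMod f)) N
      have h2 : -((m + 1 : ℕ) : ZMod f) + 1 = -(m : ZMod f) := by push_cast; ring
      rw [h2] at h1
      have h3 : cyc p (-((m + 1 : ℕ) : ZMod f)) N
          = p * cyc p (-(m : ZMod f)) N - ((p : ℤ) ^ f - 1) * N (-((m + 1 : ℕ) : ZMod f)) := by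
        linarith
      rw [h3]
      exact dvd_sub (ih.mul_left _) (dvd_mul_right _ _)
  have := key (-τ).val
  rwa [ZMod.natCast_zmod_val, neg_neg] at this

lemma cyc_types (p : ℕ) {f : ℕ} [NeZero f] (k : ℕ) (ρ : ℕ → ℤ) (τ : ZMod f) :
    cyc p τ (fun σ => ∑ e ∈ Finset.range k, if (e : ZMod f) = σ then ρ e else 0)
      = ∑ e ∈ Finset.range k, (p : ℤ) ^ ((e : ZMod f) - τ).val * ρ e := by
  unfold cyc
  simp only [Finset.mul_sum]
  rw [Finset.sum_comm]
  apply Finset.sum_congr rfl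
  intro e _
  simp

lemma types_modEq (p : ℕ) {f : ℕ} [NeZero f] (k : ℕ) (ρ : ℕ → ℤ) :
    (∑ e ∈ Finset.range k, (p : ℤ) ^ e * ρ e) ≡
      cyc p (0 : ZMod f) (fun σ => ∑ e ∈ Finset.range k, if (e : ZMod f) = σ then ρ e else 0)
      [ZMOD ((p : ℤ) ^ f - 1)] := by
  rw [cyc_types, Int.modEq_iff_dvd, ← Finset.sum_sub_distrib]
  apply Finset.dvd_sum
  intro e _
  rw [← sub_mul]
  apply Dvd.dvd.mul_right
  rw [sub_zero, ZMod.val_natCast]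
  have h : (p : ℤ) ^ e = ((p : ℤ) ^ f) ^ (e / f) * (p : ℤ) ^ (e % f) := by
    rw [← pow_mul, ← pow_add, Nat.div_add_mod]
  rw [h]
  have h2 : (p : ℤ) ^ f - 1 ∣ ((p : ℤ) ^ f) ^ (e / f) - 1 := sub_one_dvd_pow_sub_one _ _
  have h3 : (p : ℤ) ^ (e % f) - ((p : ℤ) ^ f) ^ (e / f) * (p : ℤ) ^ (e % f)
      = -((((p : ℤ) ^ f) ^ (e / f) - 1) * (p : ℤ) ^ (e % f)) := by ring
  rw [h3]
  exact (h2.mul_right _).neg_right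

end SheatsOpt

/-! ### Admissible decompositions and their configurations -/

namespace SheatsOpt

/-- The part `μ_i = ∑ a_{e,i} p ^ e` of a digitwise decomposition `a` of `k`, where `a e i` is the share
of the digit at position `e` given to the index `i`. -/
def part (p k : ℕ) (a : ℕ → ℕ → ℕ) (i : ℕ) : ℕ := ∑ e ∈ Finset.range k, p ^ e * a e i

/-- Digitwise (carry-free) decompositions `k = μ_0 + ⋯ + μ_d` with `μ_0, …, μ_{d-1}` divisible by
`q - 1` for `q = p ^ f` and `μ_1, …, μ_{d-1}` positive. They index the surviving terms in the
expansion of `S̃_d(-k)`. -/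
structure Adm (p f k d : ℕ) (a : ℕ → ℕ → ℕ) : Prop where
  sum : ∀ e < k, ∑ i ∈ Finset.range (d + 1), a e i = dig p k e
  dvd : ∀ i < d, (p ^ f - 1) ∣ part p k a i
  pos : ∀ i, 0 < i → i < d → 0 < part p k a i

/-- The weight `∑ i μ_i`, the exponent of the corresponding monomial of `S̃_d(-k)`. -/
def weight (p k d : ℕ) (a : ℕ → ℕ → ℕ) : ℕ := ∑ i ∈ Finset.range (d + 1), i * part p k a i

/-- The part of the digit at position `e` given to indices below `j`. -/
def hd (a : ℕ → ℕ → ℕ) (e j : ℕ) : ℤ := ∑ i ∈ Finset.range j, (a e i : ℤ)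

/-- The number of units of type `τ` given to indices below `j`. -/
def headCount (f k : ℕ) (a : ℕ → ℕ → ℕ) (j : ℕ) (τ : ZMod f) : ℤ :=
  ∑ e ∈ Finset.range k, if (e : ZMod f) = τ then hd a e j else 0

lemma hd_succ (a : ℕ → ℕ → ℕ) (e j : ℕ) : hd a e (j + 1) = hd a e j + a e j :=
  Finset.sum_range_succ _ _

lemma hd_mono (a : ℕ → ℕ → ℕ) (e : ℕ) : Monotone (hd a e) := by
  apply monotone_nat_of_le_succ
  intro j
  rw [hd_succ]; omega

lemma hd_nonneg (a : ℕ → ℕ → ℕ) (e j : ℕ) : 0 ≤ hd a e j :=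
  Finset.sum_nonneg fun _ _ => by positivity

lemma Adm.hd_top {p f k d : ℕ} {a : ℕ → ℕ → ℕ} (h : Adm p f k d a) {e : ℕ} (he : e < k) :
    hd a e (d + 1) = dig p k e := by
  rw [← h.sum e he]; simp [hd]

lemma Adm.hd_le {p f k d : ℕ} {a : ℕ → ℕ → ℕ} (h : Adm p f k d a) {e j : ℕ} (he : e < k)
    (hj : j ≤ d) : hd a e j ≤ dig p k e := by
  rw [← h.hd_top he]; exact hd_mono a e (by omega)

lemma sum_pow_hd (p k : ℕ) (a : ℕ → ℕ → ℕ) (j : ℕ) :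
    ∑ e ∈ Finset.range k, (p : ℤ) ^ e * hd a e j = ∑ i ∈ Finset.range j, (part p k a i : ℤ) := by
  unfold hd part
  simp only [Finset.mul_sum]
  rw [Finset.sum_comm]
  push_cast
  rfl

lemma q_sub_one_cast {p f : ℕ} [NeZero f] (hp : 2 ≤ p) :
    ((p ^ f - 1 : ℕ) : ℤ) = (p : ℤ) ^ f - 1 := by
  have : 1 ≤ p ^ f := Nat.one_le_pow _ _ (by omega)
  push_cast [this]; rfl

lemma q_sub_one_pos {p f : ℕ} [NeZero f] (hp : 2 ≤ p) : 0 < (p : ℤ) ^ f - 1 := by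
  have : 1 < (p : ℤ) ^ f := one_lt_pow₀ (by exact_mod_cast (by omega : 1 < p)) (NeZero.ne f)
  omega

/-- Summation by parts. -/
lemma tail_sum (x : ℕ → ℤ) (d : ℕ) :
    ∑ i ∈ Finset.range (d + 1), (i : ℤ) * x i
      = ∑ j ∈ Finset.range d, (∑ i ∈ Finset.range (d + 1), x i - ∑ i ∈ Finset.range (j + 1), x i) := by
  induction d with
  | zero => simp
  | succ d ih =>
    rw [Finset.sum_range_succ, ih, Finset.sum_range_succ (fun j =>
      ∑ i ∈ Finset.range (d + 1 + 1), x i - ∑ i ∈ Finset.range (j + 1), x i) d]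
    have : ∀ j ∈ Finset.range d, ∑ i ∈ Finset.range (d + 1 + 1), x i - ∑ i ∈ Finset.range (j + 1), x i
       = (∑ i ∈ Finset.range (d + 1), x i - ∑ i ∈ Finset.range (j + 1), x i) + x (d + 1) := by
      intro j _
      rw [Finset.sum_range_succ _ (d + 1)]; ring
    rw [Finset.sum_congr rfl this, Finset.sum_add_distrib, Finset.sum_range_succ _ (d + 1)]
    simp
    ring

/-- The weight is the sum over `1 ≤ j ≤ d` of the total sizes of the units given to indices `≥ j`. -/
lemma Adm.weight_eq {p f k d : ℕ} {a : ℕ → ℕ → ℕ} (h : Adm p f k d a) :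
    (weight p k d a : ℤ) = ∑ ι ∈ Finset.range d, ∑ e ∈ Finset.range k,
      ((dig p k e : ℤ) - hd a e (d - ι)) * (p : ℤ) ^ e := by
  have h1 : (weight p k d a : ℤ)
      = ∑ e ∈ Finset.range k, (p : ℤ) ^ e * ∑ i ∈ Finset.range (d + 1), (i : ℤ) * a e i := by
    unfold weight part
    push_cast
    simp only [Finset.mul_sum]
    rw [Finset.sum_comm]
    apply Finset.sum_congr rfl; intro _ _
    apply Finset.sum_congr rfl; intro _ _
    ring
  rw [h1, Finset.sum_comm]
  apply Finset.sum_congr rfl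
  intro e he
  rw [tail_sum, ← Finset.sum_mul, mul_comm]
  congr 1
  rw [← Finset.sum_range_reflect]
  apply Finset.sum_congr rfl
  intro ι hι
  rw [Finset.mem_range] at hι he
  rw [← h.hd_top he, show d - 1 - ι + 1 = d - ι by omega]
  rfl

/-- The type counts of the tails `i ≥ d - ι` of an admissible decomposition come from a
configuration: divisibility by `q - 1` makes the parameters integral and positivity of the parts
makes them strictly increasing. -/
lemma headCount_conf {p f k d : ℕ} [NeZero f] (hp : 2 ≤ p) (hd1 : 1 ≤ d) {a : ℕ → ℕ → ℕ}
    (h : Adm p f k d a) :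
    ∃ c, (digitData p f k hp).IsConf (d - 1) 0 c ∧ ∀ ι < d, ∀ τ,
      (digitData p f k hp).N (c ι) τ = cum p f k τ k - headCount f k a (d - ι) τ := by
  have hq := q_sub_one_pos (f := f) hp
  have hdvd : ∀ j ≤ d, ∀ τ : ZMod f, ((p : ℤ) ^ f - 1) ∣ cyc p τ (headCount f k a j) := by
    intro j hj τ
    apply cyc_dvd
    have h1 := types_modEq p (f := f) k (fun e => hd a e j)
    refine h1.dvd_iff.1 ?_
    rw [sum_pow_hd]
    apply Finset.dvd_sum
    intro i hi
    rw [← q_sub_one_cast hp]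
    exact_mod_cast h.dvd i (by rw [Finset.mem_range] at hi; omega)
  have hex : ∀ j, ∃ cT : ZMod f → ℤ, j ≤ d → ∀ τ, cyc p τ (headCount f k a j) = ((p : ℤ) ^ f - 1) * cT τ := by
    intro j
    by_cases hj : j ≤ d
    · choose cT hcT using fun τ => hdvd j hj τ
      exact ⟨cT, fun _ => hcT⟩
    · exact ⟨0, fun h => absurd h hj⟩
  choose cT hcT using hex
  have hN : ∀ j ≤ d, ∀ τ, headCount f k a j τ = p * cT j (τ + 1) - cT j τ := by
    intro j hj τ
    have h1 := cyc_step p τ (headCount f k a j)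
    rw [hcT j hj, hcT j hj] at h1
    apply mul_left_cancel₀ hq.ne'
    linarith
  have hN' : ∀ ι < d, ∀ τ, (digitData p f k hp).N (fun τ => - cT (d - ι) τ) τ
      = cum p f k τ k - headCount f k a (d - ι) τ := by
    intro ι _ τ
    rw [hN _ (by omega)]
    show cum p f k τ k + p * (- cT (d - ι) (τ + 1)) - (- cT (d - ι) τ) = _
    ring
  refine ⟨fun ι τ => - cT (d - ι) τ, ⟨?_, ?_, ?_⟩, hN'⟩
  · intro ι hι τ
    rw [hN' ι (by omega)]
    have h1 : 0 ≤ headCount f k a (d - ι) τ := Finset.sum_nonneg fun e _ => by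
      split_ifs
      · exact hd_nonneg _ _ _
      · exact le_rfl
    have h2 : headCount f k a (d - ι) τ ≤ cum p f k τ k := Finset.sum_le_sum fun e he => by
      split_ifs
      · exact h.hd_le (Finset.mem_range.1 he) (by omega)
      · exact le_rfl
    refine ⟨by omega, ?_⟩
    show _ ≤ cum p f k τ k
    omega
  · intro ι hι τ
    have hj1 : 0 < d - (ι + 1) := by omega
    obtain ⟨j, hj⟩ : ∃ j, j = d - (ι + 1) := ⟨_, rfl⟩
    have hj' : d - ι = j + 1 := by omega
    simp only [← hj, hj']
    have hlt : cyc p τ (headCount f k a j) < cyc p τ (headCount f k a (j + 1)) := by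
      have e1 := cyc_types p k (fun e => hd a e j) τ
      have e2 := cyc_types p k (fun e => hd a e (j + 1)) τ
      unfold headCount
      rw [e1, e2]
      have hppos : (0 : ℤ) < p := by exact_mod_cast (by omega : 0 < p)
      apply Finset.sum_lt_sum
      · intro e _
        apply mul_le_mul_of_nonneg_left (hd_mono a e (by omega)) (by positivity)
      · have hpos := h.pos j (by omega) (by omega)
        unfold part at hpos
        obtain ⟨e, he, hne⟩ := Finset.exists_ne_zero_of_sum_ne_zero hpos.ne'
        refine ⟨e, he, ?_⟩
        apply mul_lt_mul_of_pos_left _ (by positivity)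
        rw [hd_succ]
        have : a e j ≠ 0 := right_ne_zero_of_mul hne
        omega
    rw [hcT j (by omega), hcT (j + 1) (by omega)] at hlt
    have := lt_of_mul_lt_mul_left hlt hq.le
    omega
  · intro τ
    have h1 := hcT (d - (d - 1)) (by omega) τ
    have h2 : 0 ≤ cyc p τ (headCount f k a (d - (d - 1))) := by
      have e1 := cyc_types p k (fun e => hd a e (d - (d - 1))) τ
      unfold headCount
      rw [e1]
      apply Finset.sum_nonneg
      intro e _
      have := hd_nonneg a e (d - (d - 1))
      positivity
    rw [h1] at h2
    have := nonneg_of_mul_nonneg_right h2 hq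
    simp only [Pi.zero_apply]
    omega

lemma sum_types {p f k : ℕ} [NeZero f] (x : ℕ → ℤ) :
    ∑ τ : ZMod f, ∑ e ∈ Finset.range k, (if (e : ZMod f) = τ then x e else 0) * (p : ℤ) ^ e
      = ∑ e ∈ Finset.range k, x e * (p : ℤ) ^ e := by
  rw [Finset.sum_comm]
  apply Finset.sum_congr rfl
  intro e _
  rw [← Finset.sum_mul]
  simp

/-- The weight of an admissible decomposition is at least the cost of its configuration, with equality
only if every tail consists of the smallest units of each type. -/
lemma cost_le {p f k d : ℕ} [NeZero f] (hp : 2 ≤ p) (hd1 : 1 ≤ d) {a : ℕ → ℕ → ℕ}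
    (h : Adm p f k d a) {c : ℕ → ZMod f → ℤ}
    (hc : ∀ ι < d, ∀ τ,
      (digitData p f k hp).N (c ι) τ = cum p f k τ k - headCount f k a (d - ι) τ) :
    (digitData p f k hp).F (d - 1) c ≤ weight p k d a ∧
    ((weight p k d a : ℤ) ≤ (digitData p f k hp).F (d - 1) c → ∀ ι < d, ∀ e < k,
      (dig p k e : ℤ) - hd a e (d - ι)
        = greedy p f k e ((digitData p f k hp).N (c ι) e) e) := by
  set A := digitData p f k hp with hA
  have hG : ∀ ι < d, ∀ τ, A.G τ (A.N (c ι) τ) ≤ ∑ e ∈ Finset.range k,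
      (if (e : ZMod f) = τ then (dig p k e : ℤ) - hd a e (d - ι) else 0) * (p : ℤ) ^ e ∧
      (∑ e ∈ Finset.range k,
        (if (e : ZMod f) = τ then (dig p k e : ℤ) - hd a e (d - ι) else 0) * (p : ℤ) ^ e
          ≤ A.G τ (A.N (c ι) τ) → ∀ e < k,
        (if (e : ZMod f) = τ then (dig p k e : ℤ) - hd a e (d - ι) else 0)
          = greedy p f k τ (A.N (c ι) τ) e) := by
    intro ι hι τ
    apply G_le_of_digits hp
    · intro e he
      have h1 := hd_nonneg a e (d - ι)
      have h2 := h.hd_le he (show d - ι ≤ d by omega)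
      split_ifs <;> omega
    · rw [hc ι hι τ]
      unfold cum headCount
      rw [← Finset.sum_sub_distrib]
      apply Finset.sum_congr rfl
      intro e _
      split_ifs <;> ring
  have hF : A.F (d - 1) c = ∑ ι ∈ Finset.range d, ∑ τ, A.G τ (A.N (c ι) τ) := by
    unfold Data.F Data.g
    rw [Nat.sub_add_cancel hd1]
  have hW : (weight p k d a : ℤ) = ∑ ι ∈ Finset.range d, ∑ τ : ZMod f, ∑ e ∈ Finset.range k,
      (if (e : ZMod f) = τ then (dig p k e : ℤ) - hd a e (d - ι) else 0) * (p : ℤ) ^ e := by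
    rw [h.weight_eq]
    apply Finset.sum_congr rfl
    intro ι _
    rw [sum_types]
  have hin : ∀ ι ∈ Finset.range d, ∑ τ, A.G τ (A.N (c ι) τ) ≤ ∑ τ : ZMod f, ∑ e ∈ Finset.range k,
      (if (e : ZMod f) = τ then (dig p k e : ℤ) - hd a e (d - ι) else 0) * (p : ℤ) ^ e :=
    fun ι hι => Finset.sum_le_sum fun τ _ => (hG ι (Finset.mem_range.1 hι) τ).1
  rw [hF, hW]
  refine ⟨Finset.sum_le_sum hin, fun hle ι hι e he => ?_⟩
  have e1 := (Finset.sum_eq_sum_iff_of_le hin).1 (le_antisymm (Finset.sum_le_sum hin) hle) ι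
    (Finset.mem_range.2 hι)
  have e2 := (Finset.sum_eq_sum_iff_of_le (fun τ _ => (hG ι hι τ).1)).1 e1 (e : ZMod f)
    (Finset.mem_univ _)
  have e3 := (hG ι hι (e : ZMod f)).2 e2.ge e he
  simpa using e3

end SheatsOpt

/-! ### The unique admissible decomposition of least weight -/

namespace SheatsOpt

lemma greedy_ite {p f k : ℕ} (L : ZMod f → ℤ) (τ : ZMod f) (e : ℕ) :
    (if (e : ZMod f) = τ then greedy p f k e (L e) e else 0) = greedy p f k τ (L τ) e := by
  split_ifs with h
  · rw [h]
  · rw [greedy_of_ne h]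

/-- An optimal configuration is realized by an admissible decomposition with weight equal to its cost.
The tails given by the smallest units are nested by `Data.opt_nested`. -/
lemma adm_of_opt {p f k d : ℕ} [NeZero f] (hp : 2 ≤ p) (hd1 : 1 ≤ d) {C : ℕ → ZMod f → ℤ}
    (hC : (digitData p f k hp).IsOpt (d - 1) 0 C) :
    ∃ a, Adm p f k d a ∧ (weight p k d a : ℤ) = (digitData p f k hp).F (d - 1) C ∧
      ∀ ι < d, ∀ e < k, (dig p k e : ℤ) - hd a e (d - ι)
        = greedy p f k e ((digitData p f k hp).N (C ι) e) e := by
  set A := digitData p f k hp with hA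
  have hq := q_sub_one_pos (f := f) hp
  have hfeas : ∀ ι ≤ d - 1, ∀ τ, 0 ≤ A.N (C ι) τ ∧ A.N (C ι) τ ≤ cum p f k τ k := hC.1.1
  have hcum : ∀ τ : ZMod f, 0 ≤ cum p f k τ k := by
    intro τ
    have := cum_mono p f k τ (Nat.zero_le k)
    rwa [cum_zero] at this
  set L : ℕ → ZMod f → ℤ := fun j τ =>
    if j = 0 then cum p f k τ k else if j ≤ d then A.N (C (d - j)) τ else 0 with hL
  have L0 : ∀ τ, L 0 τ = cum p f k τ k := fun τ => by simp [hL]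
  have Lmid : ∀ j, 1 ≤ j → j ≤ d → L j = A.N (C (d - j)) := by
    intro j h1 h2
    funext τ
    simp only [hL]
    rw [if_neg (by omega), if_pos h2]
  have Ltop : ∀ τ, L (d + 1) τ = 0 := fun τ => by simp [hL]
  have Lbd : ∀ j τ, 0 ≤ L j τ ∧ L j τ ≤ cum p f k τ k := by
    intro j τ
    have := hcum τ
    simp only [hL]
    split_ifs
    · omega
    · exact hfeas _ (by omega) τ
    · omega
  have Lanti : ∀ j τ, L (j + 1) τ ≤ L j τ := by
    intro j τ
    rcases Nat.eq_zero_or_pos j with h | h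
    · rw [h, L0]; exact (Lbd 1 τ).2
    · by_cases hj : j + 1 ≤ d
      · rw [Lmid j h (by omega), Lmid (j + 1) (by omega) hj]
        have := A.opt_nested hC (j := d - (j + 1)) (by omega) τ
        rwa [show d - (j + 1) + 1 = d - j by omega] at this
      · have : L (j + 1) τ = 0 := by
          simp only [hL]
          rw [if_neg (by omega), if_neg hj]
        rw [this]; exact (Lbd j τ).1
  set ρ : ℕ → ℕ → ℤ := fun e j => greedy p f k e (L j e) e with hρ
  set a : ℕ → ℕ → ℕ := fun e i => (ρ e i - ρ e (i + 1)).toNat with ha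
  have hacast : ∀ e i, (a e i : ℤ) = ρ e i - ρ e (i + 1) := by
    intro e i
    have : ρ e (i + 1) ≤ ρ e i := greedy_mono (Lanti i _) e
    simp only [ha]
    omega
  have hhd : ∀ e < k, ∀ j, hd a e j = dig p k e - ρ e j := by
    intro e he j
    induction j with
    | zero =>
      simp only [hρ, L0]
      rw [greedy_full he]
      simp [hd]
    | succ j ih => rw [hd_succ, ih, hacast]; ring
  have hcount : ∀ j τ, headCount f k a j τ = cum p f k τ k - L j τ := by
    intro j τ
    have h1 := sum_greedy (Lbd j τ).1 (Lbd j τ).2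
    have h2 : headCount f k a j τ = ∑ e ∈ Finset.range k,
        ((if (e : ZMod f) = τ then (dig p k e : ℤ) else 0) - greedy p f k τ (L j τ) e) := by
      apply Finset.sum_congr rfl
      intro e he
      rw [hhd e (Finset.mem_range.1 he), ← greedy_ite]
      split_ifs <;> simp [hρ]
    rw [h2, Finset.sum_sub_distrib, h1]
    rfl
  have hNC : ∀ j, 1 ≤ j → j ≤ d → headCount f k a j
      = fun τ => p * (fun τ => - C (d - j) τ) (τ + 1) - (fun τ => - C (d - j) τ) τ := by
    intro j h1 h2
    funext τ
    rw [hcount, Lmid j h1 h2]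
    have : A.N (C (d - j)) τ = cum p f k τ k + p * C (d - j) (τ + 1) - C (d - j) τ := rfl
    rw [this]
    ring
  have hcyc : ∀ j, 1 ≤ j → j ≤ d → ∀ τ, cyc p τ (headCount f k a j)
      = ((p : ℤ) ^ f - 1) * (- C (d - j) τ) := by
    intro j h1 h2 τ
    rw [hNC j h1 h2]
    exact cyc_of_diff p τ (fun τ => - C (d - j) τ)
  have hdvdT : ∀ j ≤ d, ((p : ℤ) ^ f - 1) ∣ ∑ i ∈ Finset.range j, (part p k a i : ℤ) := by
    intro j hj
    rcases Nat.eq_zero_or_pos j with h | h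
    · simp [h]
    · have h1 := types_modEq p (f := f) k (fun e => hd a e j)
      rw [← sum_pow_hd]
      refine h1.dvd_iff.2 ?_
      have h2 := hcyc j h hj 0
      unfold headCount at h2
      rw [h2]
      exact dvd_mul_right _ _
  have hdig : ∀ ι < d, ∀ e < k, (dig p k e : ℤ) - hd a e (d - ι)
        = greedy p f k e (A.N (C ι) e) e := by
    intro ι hι e he
    rw [hhd e he]
    simp only [hρ]
    rw [Lmid (d - ι) (by omega) (by omega), show d - (d - ι) = ι by omega]
    ring
  have hadm : Adm p f k d a := by
    refine ⟨?_, ?_, ?_⟩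
    · intro e he
      have h1 := hhd e he (d + 1)
      simp only [hρ, Ltop, greedy_zero, sub_zero] at h1
      unfold hd at h1
      exact_mod_cast h1
    · intro i hi
      have h1 := hdvdT i hi.le
      have h2 := hdvdT (i + 1) hi
      rw [Finset.sum_range_succ] at h2
      have h3 := (dvd_add_right h1).1 h2
      rw [← q_sub_one_cast hp] at h3
      exact_mod_cast h3
    · intro i h0 hi
      rw [Nat.pos_iff_ne_zero]
      intro hz
      unfold part at hz
      rw [Finset.sum_eq_zero_iff] at hz
      have hz' : ∀ e < k, hd a e (i + 1) = hd a e i := by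
        intro e he
        have h1 := hz e (Finset.mem_range.2 he)
        have h2 : a e i = 0 := by
          rcases mul_eq_zero.1 h1 with h | h
          · have : p ^ e ≠ 0 := pow_ne_zero _ (by omega)
            exact absurd h this
          · exact h
        rw [hd_succ, h2]; simp
      have h1 : headCount f k a (i + 1) = headCount f k a i := by
        funext τ
        apply Finset.sum_congr rfl
        intro e he
        rw [hz' e (Finset.mem_range.1 he)]
      have h2 := hcyc i h0 hi.le 0
      have h3 := hcyc (i + 1) (by omega) hi 0
      rw [h1, h2] at h3
      have h4 := mul_left_cancel₀ hq.ne' h3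
      have h5 := hC.1.2.1 (d - (i + 1)) (by omega) 0
      rw [show d - (i + 1) + 1 = d - i by omega] at h5
      omega
  refine ⟨a, hadm, ?_, hdig⟩
  rw [hadm.weight_eq]
  unfold Data.F Data.g
  rw [Nat.sub_add_cancel hd1]
  apply Finset.sum_congr rfl
  intro ι hι
  rw [Finset.mem_range] at hι
  have h1 : ∀ τ ∈ Finset.univ, A.G τ (A.N (C ι) τ) = ∑ e ∈ Finset.range k,
      (if (e : ZMod f) = τ then (dig p k e : ℤ) - hd a e (d - ι) else 0) * (p : ℤ) ^ e := by
    intro τ _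
    have := hfeas ι (by omega) τ
    rw [G_eq_greedy hp this.1 this.2]
    apply Finset.sum_congr rfl
    intro e he
    rw [hdig ι hι e (Finset.mem_range.1 he), greedy_ite]
  rw [Finset.sum_congr rfl h1, sum_types]

/-- There is a unique admissible decomposition of least weight as soon as a configuration exists. -/
theorem exists_unique_min {p f k d : ℕ} [NeZero f] (hp : 2 ≤ p) (hd1 : 1 ≤ d)
    (hconf : ∃ c, (digitData p f k hp).IsConf (d - 1) 0 c) :
    ∃ a, Adm p f k d a ∧ ∀ a', Adm p f k d a' → weight p k d a' ≤ weight p k d a →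
      ∀ e < k, ∀ i ≤ d, a' e i = a e i := by
  obtain ⟨C, hC⟩ := (digitData p f k hp).exists_opt hconf
  obtain ⟨a, ha, haW, hag⟩ := adm_of_opt hp hd1 hC
  refine ⟨a, ha, fun a' ha' hle e he i hi => ?_⟩
  obtain ⟨c', hc', hcN⟩ := headCount_conf hp hd1 ha'
  obtain ⟨h1, h2⟩ := cost_le hp hd1 ha' hcN
  have hle' : (weight p k d a' : ℤ) ≤ weight p k d a := by exact_mod_cast hle
  have h3 := hC.2 _ hc'
  have hopt : (digitData p f k hp).IsOpt (d - 1) 0 c' :=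
    ⟨hc', fun y hy => by have := hC.2 y hy; omega⟩
  have h4 := h2 (by omega)
  have hh : ∀ j ≤ d + 1, hd a' e j = hd a e j := by
    intro j hj
    rcases Nat.eq_zero_or_pos j with h | h
    · subst h; simp [hd]
    · by_cases hjd : j = d + 1
      · rw [hjd, ha'.hd_top he, ha.hd_top he]
      · have e1 := h4 (d - j) (by omega) e he
        have e2 := hag (d - j) (by omega) e he
        rw [(digitData p f k hp).opt_unique hopt hC (d - j) (by omega), ← e2,
          show d - (d - j) = j by omega] at e1
        omega
  have h5 := hh i (by omega)
  have h6 := hh (i + 1) (by omega)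
  rw [hd_succ, hd_succ] at h6
  omega

/-- Configurations of length `d - 1` exist when all the cyclic sums `cyc p τ` of the digit counts are at
least `(d - 1)(q - 1)`. They are the negatives of the largest vectors with nonnegative counts below
shifts of the integral parts of `cyc p τ / (q - 1)`. -/
lemma exists_conf {p f k d : ℕ} [NeZero f] (hp : 2 ≤ p) (hd1 : 1 ≤ d)
    (hx : ∀ τ : ZMod f, ((d : ℤ) - 1) * ((p : ℤ) ^ f - 1) ≤ cyc p τ (fun τ => cum p f k τ k)) :
    ∃ c, (digitData p f k hp).IsConf (d - 1) 0 c := by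
  have hq := q_sub_one_pos (f := f) hp
  have hpz : (2 : ℤ) ≤ p := by exact_mod_cast hp
  set y : ZMod f → ℤ := fun τ => cyc p τ (fun τ => cum p f k τ k) / ((p : ℤ) ^ f - 1) with hy
  have hy1 : ∀ τ, (d : ℤ) - 1 ≤ y τ := fun τ => (Int.le_ediv_iff_mul_le hq).2 (hx τ)
  have hy2 : ∀ τ, p * y (τ + 1) - y τ ≤ cum p f k τ k := by
    intro τ
    have h1 : y (τ + 1) * ((p : ℤ) ^ f - 1) ≤ cyc p (τ + 1) (fun τ => cum p f k τ k) :=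
      Int.ediv_mul_le _ hq.ne'
    have h2 : cyc p τ (fun τ => cum p f k τ k) < (y τ + 1) * ((p : ℤ) ^ f - 1) :=
      Int.lt_ediv_add_one_mul_self _ hq
    have h3 := cyc_step p τ (fun τ => cum p f k τ k)
    have h4 := mul_le_mul_of_nonneg_left h1 (by omega : (0 : ℤ) ≤ p)
    have h5 : (p * y (τ + 1)) * ((p : ℤ) ^ f - 1) < (y τ + 1 + cum p f k τ k) * ((p : ℤ) ^ f - 1) := by
      nlinarith
    have := lt_of_mul_lt_mul_right h5 hq.le
    omega
  set B : Data (ZMod f) := { digitData p f k hp with r := fun _ => 0 } with hB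
  have hBN : ∀ z τ, B.N z τ = p * z (τ + 1) - z τ := by
    intro z τ
    show 0 + p * z (τ + 1) - z τ = _
    ring
  choose z hz1 hz2 hz3 hz4 hz5 using fun t : ℕ =>
    B.exists_closure (fun _ => (t : ℤ)) (fun τ => y τ - (d - 1) + t)
      (by intro τ; have := hy1 τ; simp only; omega)
      (by intro τ; rw [hBN]; nlinarith)
  have hN : ∀ (x : ZMod f → ℤ) τ, (digitData p f k hp).N (fun τ => - x τ) τ
      = cum p f k τ k - B.N x τ := by
    intro x τ
    rw [hBN]
    show cum p f k τ k + p * (- x (τ + 1)) - (- x τ) = _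
    ring
  have hchain : ∀ t τ, z t τ + 1 ≤ z (t + 1) τ := by
    intro t τ
    refine hz5 (t + 1) (fun τ => z t τ + 1) ?_ ?_ τ
    · intro σ
      have := hz2 t σ
      simp only at this ⊢
      push_cast
      omega
    · intro σ
      rw [B.N_add_const]
      have := hz3 t σ
      have : (2 : ℤ) ≤ B.p := B.pZ
      omega
  refine ⟨fun ι τ => - z (d - 1 - ι) τ, ⟨?_, ?_, ?_⟩⟩
  · intro ι hι τ
    rw [hN]
    have h1 := hz3 (d - 1 - ι) τ
    have h2 : B.N (z (d - 1 - ι)) τ ≤ cum p f k τ k := by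
      rcases hz4 (d - 1 - ι) τ with h | h
      · rw [hBN, h]
        have h3 : z (d - 1 - ι) (τ + 1) ≤ y (τ + 1) - (d - 1) + (d - 1 - ι : ℕ) := hz2 _ (τ + 1)
        have h4 := mul_le_mul_of_nonneg_left h3 (by omega : (0 : ℤ) ≤ p)
        have h5 := hy2 τ
        have h6 : (0 : ℤ) ≤ (p - 1) * ((d - 1) - (d - 1 - ι : ℕ)) := mul_nonneg (by omega) (by omega)
        linarith
      · rw [h]
        have := cum_mono p f k τ (Nat.zero_le k)
        rwa [cum_zero] at this
    exact ⟨by omega, show _ ≤ cum p f k τ k by omega⟩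
  · intro ι hι τ
    have := hchain (d - 1 - (ι + 1)) τ
    rw [show d - 1 - (ι + 1) + 1 = d - 1 - ι by omega] at this
    simp only
    omega
  · intro τ
    have := hz1 (d - 1 - (d - 1)) τ
    simp only [Pi.zero_apply] at this ⊢
    omega

/-! ### Base-`q` digit sums -/

/-- The sum of the base-`q` digits of `n`. -/
def ds (q n : ℕ) : ℕ := (Nat.digits q n).sum

lemma ds_eq {q : ℕ} (hq : 2 ≤ q) (n : ℕ) : ds q n = n % q + ds q (n / q) := by
  unfold ds
  rcases Nat.eq_zero_or_pos n with h | h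
  · simp [h]
  · rw [Nat.digits_def' (by omega) h]
    simp

/-- Subadditivity of the digit sum, with a carry `ε` to run the induction over digits. -/
lemma ds_carry {q : ℕ} (hq : 2 ≤ q) (n : ℕ) : ∀ x y ε, x + y = n → ε ≤ 1 →
    ds q (x + y + ε) ≤ ds q x + ds q y + ε := by
  induction n using Nat.strong_induction_on with
  | _ n ih =>
    intro x y ε hxy hε
    rcases Nat.eq_zero_or_pos n with h | h
    · obtain ⟨rfl, rfl⟩ : x = 0 ∧ y = 0 := by omega
      have h1 : ds q 0 = 0 := by simp [ds]
      have h2 := ds_eq hq (0 + 0 + ε)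
      rw [Nat.mod_eq_of_lt (by omega), Nat.div_eq_of_lt (by omega), h1] at h2
      omega
    · have hx := Nat.div_add_mod x q
      have hy := Nat.div_add_mod y q
      have hxl := Nat.mod_lt x (by omega : q > 0)
      have hyl := Nat.mod_lt y (by omega : q > 0)
      have hlt : x / q + y / q < n := by
        have h1 : x / q ≤ x := Nat.div_le_self _ _
        have h2 : y / q ≤ y := Nat.div_le_self _ _
        rcases Nat.eq_zero_or_pos x with h0 | h0
        · have := Nat.div_lt_self (show 0 < y by omega) (by omega : 1 < q)
          omega
        · have := Nat.div_lt_self h0 (by omega : 1 < q)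
          omega
      have e1 := ds_eq hq x
      have e2 := ds_eq hq y
      have e3 := ds_eq hq (x + y + ε)
      rcases Nat.lt_or_ge (x % q + y % q + ε) q with hc | hc
      · have hm : x + y + ε = (x % q + y % q + ε) + q * (x / q + y / q) := by rw [mul_add]; omega
        have hm1 : (x + y + ε) % q = x % q + y % q + ε := by
          rw [hm, Nat.add_mul_mod_self_left, Nat.mod_eq_of_lt hc]
        have hm2 : (x + y + ε) / q = x / q + y / q + 0 := by
          rw [hm, Nat.add_mul_div_left _ _ (by omega), Nat.div_eq_of_lt hc]; omega
        have := ih _ hlt (x / q) (y / q) 0 rfl (by omega)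
        rw [hm1, hm2] at e3
        omega
      · have hm : x + y + ε = (x % q + y % q + ε - q) + q * (x / q + y / q + 1) := by
          rw [mul_add, mul_add]; omega
        have hm1 : (x + y + ε) % q = x % q + y % q + ε - q := by
          rw [hm, Nat.add_mul_mod_self_left, Nat.mod_eq_of_lt (by omega)]
        have hm2 : (x + y + ε) / q = x / q + y / q + 1 := by
          rw [hm, Nat.add_mul_div_left _ _ (by omega), Nat.div_eq_of_lt (by omega)]; omega
        have := ih _ hlt (x / q) (y / q) 1 rfl (by omega)
        rw [hm1, hm2] at e3
        omega

lemma ds_add {q : ℕ} (hq : 2 ≤ q) (x y : ℕ) : ds q (x + y) ≤ ds q x + ds q y := by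
  simpa using ds_carry hq (x + y) x y 0 rfl (by omega)

lemma ds_mul {q : ℕ} (hq : 2 ≤ q) (c x : ℕ) : ds q (c * x) ≤ c * ds q x := by
  induction c with
  | zero => simp [ds]
  | succ c ih =>
    rw [add_mul, one_mul, add_mul, one_mul]
    exact (ds_add hq _ _).trans (by omega)

lemma ds_sum {q : ℕ} (hq : 2 ≤ q) (s : Finset ℕ) (x : ℕ → ℕ) :
    ds q (∑ e ∈ s, x e) ≤ ∑ e ∈ s, ds q (x e) := by
  induction s using Finset.induction_on with
  | empty => simp [ds]
  | insert a s ha ih =>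
    rw [Finset.sum_insert ha, Finset.sum_insert ha]
    exact (ds_add hq _ _).trans (by omega)

lemma ds_pow {p f : ℕ} (hp : 2 ≤ p) (hf : 0 < f) (e : ℕ) : ds (p ^ f) (p ^ e) = p ^ (e % f) := by
  have hq : 2 ≤ p ^ f := hp.trans (Nat.le_self_pow (by omega) p)
  induction e using Nat.strong_induction_on with
  | _ e ih =>
    rcases Nat.lt_or_ge e f with h | h
    · have hlt : p ^ e < p ^ f := Nat.pow_lt_pow_right (by omega) h
      rw [ds_eq hq, Nat.mod_eq_of_lt hlt, Nat.div_eq_of_lt hlt, Nat.mod_eq_of_lt h]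
      simp [ds]
    · have h1 : p ^ e = p ^ f * p ^ (e - f) := by rw [← pow_add]; congr 1; omega
      rw [ds_eq hq, h1, Nat.mul_mod_right, Nat.mul_div_cancel_left _ (by omega), ih _ (by omega),
        zero_add, Nat.mod_eq_sub_mod h]

lemma sum_dig_mod (p k M : ℕ) : ∑ e ∈ Finset.range M, dig p k e * p ^ e = k % p ^ M := by
  induction M with
  | zero => simp [Nat.mod_one]
  | succ M ih =>
    rw [Finset.sum_range_succ, ih, Nat.mod_pow_succ]
    unfold dig
    ring

lemma sum_dig {p : ℕ} (hp : 2 ≤ p) (k : ℕ) : ∑ e ∈ Finset.range k, dig p k e * p ^ e = k := by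
  rw [sum_dig_mod, Nat.mod_eq_of_lt (Nat.lt_pow_self (by omega))]

/-- The cyclic sum of the digit counts of `k` is the digit sum of `k * p ^ j` before carrying, where
`j ≡ -τ`; carrying can only make it smaller. -/
lemma ds_le_cyc {p f k : ℕ} [NeZero f] (hp : 2 ≤ p) (τ : ZMod f) :
    (ds (p ^ f) (k * p ^ (-τ).val) : ℤ) ≤ cyc p τ (fun τ => cum p f k τ k) := by
  have hf := NeZero.pos f
  have hq : 2 ≤ p ^ f := hp.trans (Nat.le_self_pow (by omega) p)
  unfold cum
  rw [cyc_types]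
  have h1 : k * p ^ (-τ).val = ∑ e ∈ Finset.range k, dig p k e * p ^ (e + (-τ).val) := by
    conv_lhs => rw [← sum_dig hp k]
    rw [Finset.sum_mul]
    simp only [pow_add, mul_assoc]
  have h2 : ds (p ^ f) (k * p ^ (-τ).val)
      ≤ ∑ e ∈ Finset.range k, p ^ ((e : ZMod f) - τ).val * dig p k e := by
    rw [h1]
    refine (ds_sum hq _ _).trans (Finset.sum_le_sum fun e _ => ?_)
    refine (ds_mul hq _ _).trans ?_
    rw [ds_pow hp hf, mul_comm]
    have : ((e : ZMod f) - τ).val = (e + (-τ).val) % f := by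
      rw [sub_eq_add_neg, ZMod.val_add, ZMod.val_natCast, Nat.mod_add_mod]
    rw [this]
  exact_mod_cast h2

end SheatsOpt

/-! ### The bound in terms of `L_k` -/

namespace SheatsOpt

/-- The bound `d ≤ L_k + 1` guarantees a unique admissible decomposition of least weight. -/
theorem exists_unique_min_of_Lval {p f k d : ℕ} (hp : 2 ≤ p) (hf : 0 < f) (hd1 : 1 ≤ d)
    (hL : (d : ℚ) ≤ Lval (p ^ f) p f k + 1) :
    ∃ a, Adm p f k d a ∧ ∀ a', Adm p f k d a' → weight p k d a' ≤ weight p k d a →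
      ∀ e < k, ∀ i ≤ d, a' e i = a e i := by
  have : NeZero f := ⟨by omega⟩
  refine exists_unique_min hp hd1 (exists_conf hp hd1 fun τ => ?_)
  refine le_trans ?_ (ds_le_cyc hp τ)
  have hlt := ZMod.val_lt (-τ)
  have h1 : Lval (p ^ f) p f k ≤ ((ds (p ^ f) (k * p ^ (-τ).val) : ℕ) : ℚ) / (((p ^ f : ℕ) : ℚ) - 1) :=
    Finset.inf'_le (s := Finset.Icc 0 (f - 1))
      (fun i => ((Nat.digits (p ^ f) (k * p ^ i)).sum : ℚ) / (((p ^ f : ℕ) : ℚ) - 1))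
      (Finset.mem_Icc.2 ⟨Nat.zero_le _, by omega⟩)
  have hpos : (0 : ℚ) < ((p ^ f : ℕ) : ℚ) - 1 := by
    have := q_sub_one_pos (f := f) hp
    have h2 : ((0 : ℤ) : ℚ) < (((p : ℤ) ^ f - 1 : ℤ) : ℚ) := by exact_mod_cast this
    push_cast at h2 ⊢
    exact h2
  have h2 : (d : ℚ) - 1 ≤ ((ds (p ^ f) (k * p ^ (-τ).val) : ℕ) : ℚ) / (((p ^ f : ℕ) : ℚ) - 1) := by
    linarith
  rw [le_div_iff₀ hpos] at h2
  push_cast at h2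
  exact_mod_cast h2

/-! ### The monomial expansion of the power sums -/

/-- All decompositions of the base-`p` digits of `k` at positions `e < k` into shares for the indices
`0, …, d`. -/
noncomputable def idx (p k d : ℕ) : Finset (Fin k → ℕ → ℕ) :=
  Fintype.piFinset fun e => Finset.piAntidiag (Finset.range (d + 1)) (dig p k e)

/-- Extension by zero to all positions `e`. -/
def extend {k : ℕ} (a : Fin k → ℕ → ℕ) (e i : ℕ) : ℕ := if h : e < k then a ⟨e, h⟩ i else 0

lemma part_extend (p : ℕ) {k : ℕ} (a : Fin k → ℕ → ℕ) (i : ℕ) :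
    part p k (extend a) i = ∑ e : Fin k, p ^ (e : ℕ) * a e i := by
  unfold part
  rw [Finset.sum_range]
  refine Finset.sum_congr rfl fun e _ => ?_
  simp [extend]

/-- The product of the multinomial coefficients of the digits. -/
def mult {k : ℕ} (d : ℕ) (a : Fin k → ℕ → ℕ) : ℕ :=
  ∏ e, Nat.multinomial (Finset.range (d + 1)) (a e)

/-- Multinomial expansion in characteristic `p`, one base-`p` digit of the exponent at a time. -/
lemma pow_expand {R : Type} [CommRing R] {p : ℕ} [Fact p.Prime] [CharP R p] (d k : ℕ) (y : ℕ → R) :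
    (∑ i ∈ Finset.range (d + 1), y i) ^ k = ∑ a ∈ idx p k d,
      (mult d a : R) * ∏ i ∈ Finset.range (d + 1), y i ^ part p k (extend a) i := by
  have hp : 2 ≤ p := (Fact.out : p.Prime).two_le
  conv_lhs => rw [← sum_dig hp k]
  rw [← Finset.prod_pow_eq_pow_sum, Finset.prod_range]
  have h1 : ∀ e : Fin k, (∑ i ∈ Finset.range (d + 1), y i) ^ (dig p k e * p ^ (e : ℕ))
      = ∑ b ∈ Finset.piAntidiag (Finset.range (d + 1)) (dig p k e),
        (Nat.multinomial (Finset.range (d + 1)) b : R) *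
          ∏ i ∈ Finset.range (d + 1), (y i ^ p ^ (e : ℕ)) ^ b i := by
    intro e
    rw [mul_comm, pow_mul, sum_pow_char_pow, Finset.sum_pow_eq_sum_piAntidiag]
  rw [Finset.prod_congr rfl fun e _ => h1 e, Finset.prod_univ_sum]
  refine Finset.sum_congr rfl fun a _ => ?_
  rw [Finset.prod_mul_distrib, Finset.prod_comm]
  unfold mult
  push_cast
  congr 1
  refine Finset.prod_congr rfl fun i _ => ?_
  rw [part_extend, ← Finset.prod_pow_eq_pow_sum]
  simp only [pow_mul]

/-- The power sum over the allowed values of the coefficient of `X ^ i`: all of `F` if `i > 0`, and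
`F` without `0` if `i = 0`. -/
noncomputable def coordSum (F : Type) [Field F] [Fintype F] (i m : ℕ) : F :=
  ∑ x ∈ (if i = 0 then Finset.univ.erase 0 else Finset.univ : Finset F), x ^ m

lemma coordSum_ne_zero {F : Type} [Field F] [Fintype F] (i m : ℕ) :
    coordSum F i m ≠ 0 ↔ (Fintype.card F - 1) ∣ m ∧ (0 < i → 0 < m) := by
  have h1 : ∑ x ∈ (Finset.univ.erase 0 : Finset F), x ^ m
      = if (Fintype.card F - 1) ∣ m then -1 else 0 := by
    rw [← FiniteField.sum_pow_units F m]
    symm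
    refine Finset.sum_bij (fun u _ => (u : F)) ?_ ?_ ?_ ?_
    · intro u _; simp
    · intro u _ v _ h; exact Units.ext h
    · intro x hx
      exact ⟨Units.mk0 x (Finset.ne_of_mem_erase hx), Finset.mem_univ _, rfl⟩
    · intro u _; simp
  have hc : ((Fintype.card F : ℕ) : F) = 0 := FiniteField.cast_card_eq_zero F
  unfold coordSum
  by_cases hi : i = 0
  · rw [if_pos hi, h1]
    subst hi
    split_ifs with h <;> simp [h]
  · rw [if_neg hi, ← Finset.add_sum_erase _ _ (Finset.mem_univ (0 : F)), h1]
    have hi' : 0 < i := by omega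
    rcases Nat.eq_zero_or_pos m with hm | hm
    · subst hm; simp [hi]
    · rw [zero_pow (by omega)]
      split_ifs with h <;> simp [h, hm]

lemma monicPoly_eq {F : Type} [Field F] (d : ℕ) (c : Fin d → F) :
    monicPoly F d c = ∑ i ∈ Finset.range (d + 1),
      C (if h : i < d then c ⟨i, h⟩ else 1) * X ^ i := by
  unfold monicPoly
  rw [Finset.sum_range_succ, Finset.sum_range, add_comm]
  simp

lemma X_dvd_monicPoly {F : Type} [Field F] {d : ℕ} (hd : 1 ≤ d) (c : Fin d → F) :
    X ∣ monicPoly F d c ↔ c ⟨0, hd⟩ = 0 := by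
  rw [X_dvd_iff, monicPoly_eq, finsetSum_coeff, Finset.sum_eq_single 0]
  · simp [show 0 < d by omega]
  · intro i _ hi
    rw [coeff_C_mul_X_pow, if_neg (by omega)]
  · simp

/-- Expansion of `S̃_d(-k)` into monomials indexed by digit decompositions. -/
lemma rPowerSum_eq {F : Type} [Field F] [Fintype F] {p : ℕ} [Fact p.Prime] [CharP F p] {d : ℕ}
    (hd : 1 ≤ d) (k : ℕ) :
    rPowerSum F X d k = ∑ a ∈ idx p k d,
      C ((mult d a : F) * ∏ i : Fin d, coordSum F i (part p k (extend a) i)) *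
        X ^ weight p k d (extend a) := by
  have h1 : ∀ c : Fin d → F, monicPoly F d c ^ k = ∑ a ∈ idx p k d,
      C ((mult d a : F) * ∏ i : Fin d, c i ^ part p k (extend a) i) *
        X ^ weight p k d (extend a) := by
    intro c
    rw [monicPoly_eq, pow_expand (p := p)]
    refine Finset.sum_congr rfl fun a _ => ?_
    simp only [mul_pow, Finset.prod_mul_distrib, ← pow_mul, Finset.prod_pow_eq_pow_sum]
    rw [Finset.prod_range_succ, Finset.prod_range]
    simp only [C_mul, map_prod, map_natCast, C_pow]
    simp [weight, mul_assoc]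
  unfold rPowerSum
  simp only [h1, X_dvd_monicPoly hd]
  have h2 : ∀ (c : Fin d → F) (y : F[X]), (if c ⟨0, hd⟩ = 0 then 0 else y)
      = if ¬ c ⟨0, hd⟩ = 0 then y else 0 := fun c y => by split_ifs <;> rfl
  simp only [h2]
  rw [← Finset.sum_filter, Finset.sum_comm]
  refine Finset.sum_congr rfl fun a _ => ?_
  rw [← Finset.sum_mul, ← map_sum, ← Finset.mul_sum]
  congr 3
  unfold coordSum
  rw [Finset.prod_univ_sum]
  refine Finset.sum_congr ?_ fun _ _ => rfl
  ext c
  simp only [Finset.mem_filter, Finset.mem_univ, true_and, Fintype.mem_piFinset]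
  constructor
  · intro h i
    split_ifs with hi
    · have : i = ⟨0, hd⟩ := Fin.ext hi
      subst this
      simpa using h
    · simp
  · intro h
    simpa using h ⟨0, hd⟩

lemma mult_ne_zero {F : Type} [Field F] {p : ℕ} [hp : Fact p.Prime] [CharP F p] {d k : ℕ}
    {a : Fin k → ℕ → ℕ} (ha : a ∈ idx p k d) : (mult d a : F) ≠ 0 := by
  unfold mult
  rw [Nat.cast_prod, Finset.prod_ne_zero_iff]
  intro e _ h
  rw [CharP.cast_eq_zero_iff F p] at h
  have hs := (Finset.mem_piAntidiag.1 (Fintype.mem_piFinset.1 ha e)).1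
  have h2 : p ∣ (dig p k e).factorial := by
    rw [← hs, ← Nat.multinomial_spec]
    exact h.mul_left _
  rw [hp.out.dvd_factorial] at h2
  exact absurd h2 (by have := dig_lt hp.out.two_le k e; omega)

/-- The coefficient of a decomposition in the expansion of `S̃_d(-k)` is nonzero exactly when the
decomposition is admissible. -/
lemma adm_iff {F : Type} [Field F] [Fintype F] {p f : ℕ} (hF : Fintype.card F = p ^ f)
    [hp : Fact p.Prime] [CharP F p] {d k : ℕ} {a : Fin k → ℕ → ℕ} (ha : a ∈ idx p k d) :
    (mult d a : F) * ∏ i : Fin d, coordSum F i (part p k (extend a) i) ≠ 0 ↔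
      Adm p f k d (extend a) := by
  rw [mul_ne_zero_iff, Finset.prod_ne_zero_iff]
  simp only [mult_ne_zero ha, coordSum_ne_zero, hF, ne_eq, not_false_eq_true, true_and,
    Finset.mem_univ, forall_true_left]
  constructor
  · intro h
    refine ⟨fun e he => ?_, fun i hi => (h ⟨i, hi⟩).1, fun i h0 hi => (h ⟨i, hi⟩).2 h0⟩
    have hs := (Finset.mem_piAntidiag.1 (Fintype.mem_piFinset.1 ha ⟨e, he⟩)).1
    simpa [extend, he] using hs
  · intro h i
    exact ⟨h.dvd i i.2, fun h0 => h.pos i h0 i.2⟩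

lemma exists_idx {p f k d : ℕ} {a : ℕ → ℕ → ℕ} (ha : Adm p f k d a) :
    ∃ b ∈ idx p k d, ∀ e < k, ∀ i ≤ d, extend b e i = a e i := by
  refine ⟨fun e i => if i ≤ d then a e i else 0, ?_, ?_⟩
  · refine Fintype.mem_piFinset.2 fun e => Finset.mem_piAntidiag.2 ⟨?_, ?_⟩
    · rw [← ha.sum e e.2]
      refine Finset.sum_congr rfl fun i hi => ?_
      rw [Finset.mem_range] at hi
      rw [if_pos (by omega)]
    · intro i hi
      rw [Finset.mem_range]
      by_contra h
      exact hi (if_neg (by omega))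
  · intro e he i hi
    simp [extend, he, hi]

lemma idx_ext {p k d : ℕ} {a b : Fin k → ℕ → ℕ} (ha : a ∈ idx p k d) (hb : b ∈ idx p k d)
    (h : ∀ e < k, ∀ i ≤ d, extend a e i = extend b e i) : a = b := by
  funext e i
  by_cases hi : i ≤ d
  · simpa [extend] using h e e.2 i hi
  · have h1 := (Finset.mem_piAntidiag.1 (Fintype.mem_piFinset.1 ha e)).2 i
    have h2 := (Finset.mem_piAntidiag.1 (Fintype.mem_piFinset.1 hb e)).2 i
    rw [Finset.mem_range] at h1 h2
    have h1' : a e i = 0 := by by_contra h; have := h1 h; omega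
    have h2' : b e i = 0 := by by_contra h; have := h2 h; omega
    rw [h1', h2']

lemma part_congr {p k d : ℕ} {a b : ℕ → ℕ → ℕ} (h : ∀ e < k, ∀ i ≤ d, a e i = b e i) {i : ℕ}
    (hi : i ≤ d) : part p k a i = part p k b i :=
  Finset.sum_congr rfl fun e he => by rw [h e (Finset.mem_range.1 he) i hi]

lemma weight_congr {p k d : ℕ} {a b : ℕ → ℕ → ℕ} (h : ∀ e < k, ∀ i ≤ d, a e i = b e i) :
    weight p k d a = weight p k d b :=
  Finset.sum_congr rfl fun i hi => by
    rw [part_congr h (Nat.lt_succ_iff.1 (Finset.mem_range.1 hi))]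

lemma Adm.congr {p f k d : ℕ} {a b : ℕ → ℕ → ℕ} (ha : Adm p f k d a)
    (h : ∀ e < k, ∀ i ≤ d, b e i = a e i) : Adm p f k d b where
  sum e he := by
    rw [← ha.sum e he]
    exact Finset.sum_congr rfl fun i hi => h e he i (Nat.lt_succ_iff.1 (Finset.mem_range.1 hi))
  dvd i hi := by rw [part_congr h hi.le]; exact ha.dvd i hi
  pos i h0 hi := by rw [part_congr h hi.le]; exact ha.pos i h0 hi

section Field

variable {F : Type} [Field F] [Fintype F] {p f : ℕ} [hp : Fact p.Prime] [CharP F p]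

lemma X_pow_dvd_rPowerSum (hF : Fintype.card F = p ^ f) {d k n : ℕ} (hd : 1 ≤ d)
    (h : ∀ a, Adm p f k d a → n ≤ weight p k d a) : X ^ n ∣ rPowerSum F X d k := by
  rw [rPowerSum_eq (p := p) hd]
  refine Finset.dvd_sum fun a ha => ?_
  by_cases h0 : (mult d a : F) * ∏ i : Fin d, coordSum F i (part p k (extend a) i) = 0
  · rw [h0]; simp
  · exact (pow_dvd_pow X (h _ ((adm_iff hF ha).1 h0))).mul_left _

lemma rPowerSum_coeff_ne_zero (hF : Fintype.card F = p ^ f) {d k : ℕ} (hd : 1 ≤ d)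
    {a : ℕ → ℕ → ℕ} (ha : Adm p f k d a)
    (hmin : ∀ a', Adm p f k d a' → weight p k d a' ≤ weight p k d a →
      ∀ e < k, ∀ i ≤ d, a' e i = a e i) :
    (rPowerSum F X d k).coeff (weight p k d a) ≠ 0 := by
  obtain ⟨b, hb, hba⟩ := exists_idx ha
  rw [rPowerSum_eq (p := p) hd, finsetSum_coeff, Finset.sum_eq_single b]
  · rw [coeff_C_mul_X_pow, if_pos (weight_congr hba).symm]
    exact (adm_iff hF hb).2 (ha.congr hba)
  · intro b' hb' hne
    rw [coeff_C_mul_X_pow]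
    split_ifs with hw
    · by_contra h0
      refine hne (idx_ext hb' hb fun e he i hi => ?_)
      rw [hmin _ ((adm_iff hF hb').1 h0) hw.ge e he i hi, hba e he i hi]
    · rfl
  · exact fun h => absurd hb h

end Field

/-! ### Dependence on the degree -/

/-- The decomposition obtained by merging the indices `0` and `1` and shifting the others down. -/
def merge (a : ℕ → ℕ → ℕ) (e i : ℕ) : ℕ := if i = 0 then a e 0 + a e 1 else a e (i + 1)

lemma part_merge_zero (p k : ℕ) (a : ℕ → ℕ → ℕ) :
    part p k (merge a) 0 = part p k a 0 + part p k a 1 := by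
  unfold part merge
  rw [← Finset.sum_add_distrib]
  exact Finset.sum_congr rfl fun e _ => by simp [mul_add]

lemma part_merge_pos (p k : ℕ) (a : ℕ → ℕ → ℕ) {i : ℕ} (hi : 0 < i) :
    part p k (merge a) i = part p k a (i + 1) := by
  unfold part merge
  exact Finset.sum_congr rfl fun e _ => by rw [if_neg (by omega)]

lemma Adm.merge {p f k d : ℕ} {a : ℕ → ℕ → ℕ} (hd : 1 ≤ d) (ha : Adm p f k (d + 1) a) :
    Adm p f k d (merge a) where
  sum e he := by
    rw [← ha.sum e he, Finset.sum_range_succ', Finset.sum_range_succ' (fun i => a e i),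
      Finset.sum_range_succ' (fun i => a e (i + 1))]
    simp [SheatsOpt.merge]
    ring
  dvd i hi := by
    rcases Nat.eq_zero_or_pos i with h | h
    · subst h
      rw [part_merge_zero]
      exact dvd_add (ha.dvd 0 (by omega)) (ha.dvd 1 (by omega))
    · rw [part_merge_pos _ _ _ h]; exact ha.dvd _ (by omega)
  pos i h0 hi := by rw [part_merge_pos _ _ _ h0]; exact ha.pos _ (by omega) (by omega)

lemma Adm.weight_merge_lt {p f k d : ℕ} {a : ℕ → ℕ → ℕ} (hd : 1 ≤ d) (ha : Adm p f k (d + 1) a) :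
    weight p k d (SheatsOpt.merge a) < weight p k (d + 1) a := by
  have h1 := ha.pos 1 (by omega) (by omega)
  unfold weight
  rw [Finset.sum_range_succ', Finset.sum_range_succ' (fun i => i * part p k a i),
    Finset.sum_range_succ' (fun i => (i + 1) * part p k a (i + 1))]
  have : ∑ i ∈ Finset.range d, (i + 1) * part p k (SheatsOpt.merge a) (i + 1)
      ≤ ∑ i ∈ Finset.range d, (i + 1 + 1) * part p k a (i + 1 + 1) := by
    refine Finset.sum_le_sum fun i _ => ?_
    rw [part_merge_pos _ _ _ (by omega)]
    exact Nat.mul_le_mul_right _ (by omega)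
  simp only [zero_mul, add_zero, zero_add, one_mul]
  omega

/-- A lower bound for the weights of admissible decompositions of length `d` holds strictly for
all greater lengths. -/
lemma min_weight_mono {p f k d n : ℕ} (hd : 1 ≤ d)
    (h : ∀ a, Adm p f k d a → n ≤ weight p k d a) {d' : ℕ} (hdd : d < d') :
    ∀ a, Adm p f k d' a → n + 1 ≤ weight p k d' a := by
  induction d', hdd using Nat.le_induction with
  | base =>
    intro a ha
    exact Nat.succ_le_of_lt ((h _ (ha.merge hd)).trans_lt (ha.weight_merge_lt hd))
  | succ m hm ih =>
    intro a ha
    have := ih _ (ha.merge (by omega))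
    have := ha.weight_merge_lt (by omega)
    omega

lemma Adm.sum_part {p f k d : ℕ} {a : ℕ → ℕ → ℕ} (hp : 2 ≤ p) (ha : Adm p f k d a) :
    ∑ i ∈ Finset.range (d + 1), part p k a i = k := by
  unfold part
  rw [Finset.sum_comm]
  conv_rhs => rw [← sum_dig hp k]
  refine Finset.sum_congr rfl fun e he => ?_
  rw [← Finset.mul_sum, ha.sum e (Finset.mem_range.1 he), mul_comm]

/-- The `d - 1` positive parts have sum at most `k`. -/
lemma Adm.le {p f k d : ℕ} {a : ℕ → ℕ → ℕ} (hp : 2 ≤ p) (ha : Adm p f k d a) : d ≤ k + 1 := by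
  have h := ha.sum_part hp
  rw [Finset.sum_range_succ'] at h
  rcases Nat.eq_zero_or_pos d with h0 | h0
  · omega
  obtain ⟨n, rfl⟩ : ∃ n, d = n + 1 := ⟨d - 1, by omega⟩
  rw [Finset.sum_range_succ] at h
  have : ∑ i ∈ Finset.range n, 1 ≤ ∑ i ∈ Finset.range n, part p k a (i + 1) :=
    Finset.sum_le_sum fun i hi => ha.pos _ (by omega) (by have := Finset.mem_range.1 hi; omega)
  simp at this
  omega

section Field

variable {F : Type} [Field F] [Fintype F] {p f : ℕ} [hp : Fact p.Prime] [CharP F p]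

lemma rPowerSum_eq_zero (hF : Fintype.card F = p ^ f) {d k : ℕ} (hd : k + 1 < d) :
    rPowerSum F X d k = 0 := by
  rw [rPowerSum_eq (p := p) (by omega)]
  refine Finset.sum_eq_zero fun a ha => ?_
  by_contra h0
  have h1 : (mult d a : F) * ∏ i : Fin d, coordSum F i (part p k (extend a) i) ≠ 0 := by
    intro h; rw [h] at h0; simp at h0
  have := ((adm_iff hF ha).1 h1).le hp.out.two_le
  omega

lemma rPowerSum_zero (k : ℕ) : rPowerSum F X 0 k = 1 := by
  have : ∀ c : Fin 0 → F, monicPoly F 0 c = 1 := fun c => by simp [monicPoly]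
  simp [rPowerSum, this, X_dvd_iff]

/-- If `d ≤ L_k + 1`, then `S̃_d(-k)` is nonzero and the power sums of larger degree have at least
its valuation at `t`, and a strictly greater one if `d ≥ 1`. -/
theorem rPowerSum_main (hF : Fintype.card F = p ^ f) (hf : 0 < f) {d k : ℕ}
    (hL : (d : ℚ) ≤ Lval (p ^ f) p f k + 1) :
    rPowerSum F X d k ≠ 0 ∧
      (∀ d', d ≤ d' → X ^ (rPowerSum F X d k).natTrailingDegree ∣ rPowerSum F X d' k) ∧
      (1 ≤ d → ∀ d', d < d' →
        X ^ ((rPowerSum F X d k).natTrailingDegree + 1) ∣ rPowerSum F X d' k) := by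
  rcases Nat.eq_zero_or_pos d with h0 | h0
  · subst h0
    rw [rPowerSum_zero]
    simp
  obtain ⟨a, ha, hmin⟩ := exists_unique_min_of_Lval hp.out.two_le hf h0 hL
  have hc := rPowerSum_coeff_ne_zero hF h0 ha hmin
  have hne : rPowerSum F X d k ≠ 0 := by
    intro h; rw [h] at hc; simp at hc
  have hle : ∀ b, Adm p f k d b → weight p k d a ≤ weight p k d b := by
    intro b hb
    by_contra hlt
    exact hlt (weight_congr (hmin b hb (by omega))).ge
  have hdeg : (rPowerSum F X d k).natTrailingDegree ≤ weight p k d a :=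
    natTrailingDegree_le_of_ne_zero hc
  refine ⟨hne, fun d' hd' => ?_, fun _ d' hd' => ?_⟩
  · rcases hd'.eq_or_lt with h | h
    · subst h
      exact (pow_dvd_pow X hdeg).trans (X_pow_dvd_rPowerSum hF h0 hle)
    · exact (pow_dvd_pow X (by omega)).trans
        (X_pow_dvd_rPowerSum hF (by omega) (min_weight_mono h0 hle h))
  · exact (pow_dvd_pow X (by omega)).trans
      (X_pow_dvd_rPowerSum hF (by omega) (min_weight_mono h0 hle hd'))

end Field

/-! ### The dominant term of the multiple zeta value -/

lemma strictAnti_le {r : ℕ} {d : Fin r → ℕ} (hd : StrictAnti d) (i : Fin r) :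
    r - 1 - (i : ℕ) ≤ d i := by
  obtain ⟨n, hn⟩ : ∃ n, n = r - 1 - (i : ℕ) := ⟨_, rfl⟩
  induction n generalizing i with
  | zero => omega
  | succ n ih =>
    have hi : (i : ℕ) + 1 < r := by omega
    have h1 := ih ⟨i + 1, hi⟩ (by simp only; omega)
    have h2 : d ⟨i + 1, hi⟩ < d i := hd (Fin.lt_def.2 (by simp))
    simp only at h1
    omega

/-- If the first entry of a strictly decreasing sequence is least possible, so are all. -/
lemma strictAnti_eq {r : ℕ} {d : Fin r → ℕ} (hd : StrictAnti d) (hr : 0 < r)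
    (h0 : d ⟨0, hr⟩ ≤ r - 1) (i : Fin r) : d i = r - 1 - (i : ℕ) := by
  refine le_antisymm ?_ (strictAnti_le hd i)
  obtain ⟨n, hn⟩ : ∃ n, n = (i : ℕ) := ⟨_, rfl⟩
  induction n generalizing i with
  | zero =>
    have : i = ⟨0, hr⟩ := Fin.ext hn.symm
    subst this
    simpa using h0
  | succ n ih =>
    have h1 := ih ⟨n, by omega⟩ rfl
    have h2 : d i < d ⟨n, by omega⟩ := hd (Fin.lt_def.2 (by simp only; omega))
    simp only at h1
    omega

lemma natTrailingDegree_prod_field {F ι : Type} [Field F] (S : Finset ι) (g : ι → F[X])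
    (h : ∀ i ∈ S, g i ≠ 0) :
    (∏ i ∈ S, g i).natTrailingDegree = ∑ i ∈ S, (g i).natTrailingDegree := by
  induction S using Finset.induction_on with
  | empty => simp
  | insert a S ha ih =>
    rw [Finset.prod_insert ha, Finset.sum_insert ha, natTrailingDegree_mul (h a (by simp))
      (Finset.prod_ne_zero_iff.2 fun i hi => h i (Finset.mem_insert_of_mem hi)),
      ih fun i hi => h i (Finset.mem_insert_of_mem hi)]

end SheatsOpt

theorem stmt15 (p f q : ℕ) (hp : p.Prime) (hf : 0 < f) (hq : q = p ^ f)
    (F : Type) [Field F] [Fintype F] (hF : Fintype.card F = q)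
    (r : ℕ) (hr : 1 < r) (s : Fin r → ℤ) (hs : ∀ i, s i < 0)
    (hnt : ∀ i : Fin r,
        ((r - 1 - (i : ℕ) : ℕ) : ℚ) ≤ Lval q p f (-(s i)).toNat + 1) :
    zetaV F X s ≠ 0 ∧
      (zetaV F X s).natTrailingDegree =
        ∑ i : Fin r,
          (rPowerSum F X (r - 1 - (i : ℕ)) (-(s i)).toNat).natTrailingDegree := by
  subst hq
  have : Fact p.Prime := ⟨hp⟩
  have : CharP F p := by
    obtain ⟨p', hp'⟩ := CharP.exists F
    obtain ⟨n, hp'p, hn⟩ := FiniteField.card F p'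
    have h1 : p' ∣ p ^ f := by
      rw [← hF, hn]; exact dvd_pow_self _ n.ne_zero
    have := (Nat.prime_dvd_prime_iff_eq hp'p hp).1 (hp'p.dvd_of_dvd_pow h1)
    rw [this] at hp'
    assumption
  -- The dominant term belongs to `d0 = (r - 1, …, 0)`.
  set κ : Fin r → ℕ := fun i => (-(s i)).toNat
  set v : Fin r → ℕ := fun i => (rPowerSum F X (r - 1 - (i : ℕ)) (κ i)).natTrailingDegree with hv
  set P : (Fin r → ℕ) → F[X] := fun d => ∏ i, rPowerSum F X (d i) (κ i) with hP
  set d0 : Fin r → ℕ := fun i => r - 1 - (i : ℕ) with hd0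
  have hmain := fun i => SheatsOpt.rPowerSum_main (F := F) (p := p) hF hf (hnt i)
  have hd0anti : StrictAnti d0 := by
    intro i j hij
    have := Fin.lt_def.1 hij
    simp only [hd0]
    omega
  have hP0 : P d0 ≠ 0 := Finset.prod_ne_zero_iff.2 fun i _ => (hmain i).1
  have hPdeg : (P d0).natTrailingDegree = ∑ i, v i :=
    SheatsOpt.natTrailingDegree_prod_field _ _ fun i _ => (hmain i).1
  have hrest : ∀ d, StrictAnti d → d ≠ d0 → X ^ (∑ i, v i + 1) ∣ P d := by
    intro d hd hne
    have hr0 : 0 < r := by omega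
    have hlt : r - 1 < d ⟨0, hr0⟩ := by
      by_contra h
      exact hne (funext fun i => SheatsOpt.strictAnti_eq hd hr0 (by omega) i)
    have h1 : ∀ i, X ^ (v i + if i = ⟨0, hr0⟩ then 1 else 0) ∣ rPowerSum F X (d i) (κ i) := by
      intro i
      split_ifs with hi
      · subst hi
        exact (hmain _).2.2 (by simp only; omega) _ (by simpa using hlt)
      · exact (hmain i).2.1 _ (SheatsOpt.strictAnti_le hd i)
    have h2 := Finset.prod_dvd_prod_of_dvd _ _ fun i (_ : i ∈ Finset.univ) => h1 i
    rw [Finset.prod_pow_eq_pow_sum, Finset.sum_add_distrib] at h2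
    simpa using h2
  have hfin : ({d : Fin r → ℕ | StrictAnti d} ∩ Function.support P).Finite := by
    have hr0 : 0 < r := by omega
    refine (Set.finite_Iic (fun _ : Fin r => κ ⟨0, hr0⟩ + 1)).subset ?_
    rintro d ⟨hd, hd'⟩ i
    have h1 : d i ≤ d ⟨0, hr0⟩ := hd.antitone (Fin.le_def.2 (Nat.zero_le _))
    refine h1.trans ?_
    by_contra! h
    refine hd' (Finset.prod_eq_zero (Finset.mem_univ ⟨0, hr0⟩) ?_)
    exact SheatsOpt.rPowerSum_eq_zero (p := p) hF h
  have hz : ∃ R : F[X], X ^ (∑ i, v i + 1) ∣ R ∧ zetaV F X s = P d0 + R := by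
    refine ⟨∑ᶠ d ∈ {d : Fin r → ℕ | StrictAnti d} \ {d0}, P d, ?_, ?_⟩
    · refine finsum_mem_induction (fun R => X ^ (∑ i, v i + 1) ∣ R) (dvd_zero _)
        (fun _ _ => dvd_add) ?_
      rintro d ⟨hd, hne⟩
      exact hrest d hd hne
    · have h3 : insert d0 ({d : Fin r → ℕ | StrictAnti d} \ {d0}) = {d | StrictAnti d} := by
        rw [Set.insert_sdiff_singleton]
        exact Set.insert_eq_of_mem hd0anti
      rw [← finsum_mem_insert' P (by simp) (hfin.subset ?_), h3]
      · rfl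
      · exact Set.inter_subset_inter_left _ Set.sdiff_subset
  obtain ⟨R, hR, hzR⟩ := hz
  have hcoeff : (zetaV F X s).coeff (∑ i, v i) ≠ 0 := by
    rw [hzR, coeff_add, X_pow_dvd_iff.1 hR _ (Nat.lt_succ_self _), add_zero, ← hPdeg]
    exact mem_support_iff.1 (natTrailingDegree_mem_support_of_nonzero hP0)
  have hzne : zetaV F X s ≠ 0 := by
    intro h; rw [h] at hcoeff; simp at hcoeff
  refine ⟨hzne, le_antisymm (natTrailingDegree_le_of_ne_zero hcoeff) ?_⟩
  refine le_natTrailingDegree hzne fun n hn => ?_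
  rw [hzR, coeff_add, X_pow_dvd_iff.1 hR _ (Nat.lt_succ_of_lt hn), add_zero]
  exact coeff_eq_zero_of_lt_natTrailingDegree (by rw [hPdeg]; exact hn)
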